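/- Every finite group occurs as a Galois group over ℝ(t); that is, for every finite group G there exists a finite Galois extension N of the field ℝ(t) of rational functions in one indeterminate over ℝ with Gal(N/ℝ(t)) isomorphic to G. -/

import Mathlib

/-!
Enumerate the elements `i` of `G`, choose distant real centres `c i`, and consider the cover of the
plane with sheets indexed by `G` that is branched over the points `c i ± iε`: crossing the vertical
slit between these two points from right to left leads from sheet `σ` to sheet `σ * i`. Left
translation of the sheets commutes with these crossings, and complex conjugation preserves the
slits. The functions on the cover that are holomorphic, of polynomial growth and compatible with
conjugation therefore form a domain on which `G` acts by left translation. An invariant function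
has the same restriction to every sheet, so it extends holomorphically across the slits, and across
their end points because it is bounded there; it is an entire function of polynomial growth, that
is, a real polynomial. Hence the fraction field is Galois over `ℝ(t)`, with group `G` as soon as
some function takes different values on different sheets.

Such a function is found by patching, without Riemann's existence theorem. Near the `i`-th slit a
function with the required monodromy is a combination of fractional powers of
`(z - iε) / (z + iε)`, where `z = t - c i`, with holomorphic coefficients. For small `ε` these
powers are close to `1` away from the slit, so that on absolutely summable partial fractions in
the `1 / (t - c j)` forming the combination is an operator `B i` close to the identity. Let `P i` be
the projection to the principal part at `c i`. Since `1 + ∑ i, P i * ((B i)⁻¹ - 1)` is close to the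
identity, there is `f` with `f + ∑ i, P i ((B i)⁻¹ f - f) = e`, where `e` is `1` on the sheet of
the identity and `0` on the others. Taking coordinates shows that `f` has the same constant terms
as `e`, which separates the sheets, and that `(B i)⁻¹ f` has no pole at `c i`, so that `f` continues
to the neighbourhood of the `i`-th slit with the required monodromy. Multiplying it by
`∏ i, ((t - c i) ^ 2 + ε ^ 2)` makes it bounded near the branch points, and adding the conjugate
function makes it compatible with conjugation.
-/

open Filter Metric Polynomial Set Topology
open scoped ComplexConjugate lp

universe u

theorem exists_isGalois_of_isGaloisGroup (G A K : Type*) (B : Type u)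
    [Group G] [Finite G] [CommRing A] [Field K] [Algebra A K] [IsFractionRing A K]
    [CommRing B] [IsDomain B] [Algebra A B] [FaithfulSMul A B] [MulSemiringAction G B]
    [IsGaloisGroup G A B] :
    ∃ (L : Type u) (_ : Field L) (_ : Algebra K L),
      FiniteDimensional K L ∧ IsGalois K L ∧ Nonempty (Gal(L/K) ≃* G) := by
  let L := FractionRing B
  have inj : Function.Injective (algebraMap A L) := FaithfulSMul.algebraMap_injective A L
  let _ : Algebra K L := (IsFractionRing.lift inj).toAlgebra
  have : IsScalarTower A K L :=
    .of_algebraMap_eq fun a => (IsFractionRing.lift_algebraMap inj a).symm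
  let _ : MulSemiringAction G L := IsFractionRing.mulSemiringAction G B L
  have : SMulDistribClass G B L := IsFractionRing.smulDistribClass G B L
  have : IsGaloisGroup G K L := IsGaloisGroup.to_isFractionRing G A B K L
  exact ⟨L, inferInstance, inferInstance, IsGaloisGroup.finiteDimensional G K L,
    IsGaloisGroup.isGalois G K L, ⟨(IsGaloisGroup.mulEquivAlgEquiv G K L).symm⟩⟩

section PolynomialGrowth

theorem exists_norm_aeval_le (p : ℝ[X]) : ∃ q : ℝ[X], ∀ z : ℂ, ‖aeval z p‖ ≤ q.eval ‖z‖ := by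
  induction p using Polynomial.induction_on' with
  | add p₁ p₂ h₁ h₂ =>
    obtain ⟨q₁, h₁⟩ := h₁
    obtain ⟨q₂, h₂⟩ := h₂
    exact ⟨q₁ + q₂, fun z => by
      simpa using (norm_add_le _ _).trans (add_le_add (h₁ z) (h₂ z))⟩
  | monomial n a => exact ⟨monomial n |a|, fun z => by simp [aeval_monomial]⟩

/-- `f` is bounded on `s` by a polynomial in the norm of the variable. -/
def PolynomiallyBoundedOn (f : ℂ → ℂ) (s : Set ℂ) : Prop :=
  ∃ q : ℝ[X], ∀ z ∈ s, ‖f z‖ ≤ q.eval ‖z‖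

namespace PolynomiallyBoundedOn

variable {f g : ℂ → ℂ} {s : Set ℂ}

theorem of_aeval (p : ℝ[X]) (s : Set ℂ) : PolynomiallyBoundedOn (fun z => aeval z p) s :=
  let ⟨q, hq⟩ := exists_norm_aeval_le p
  ⟨q, fun z _ => hq z⟩

theorem add (hf : PolynomiallyBoundedOn f s) (hg : PolynomiallyBoundedOn g s) :
    PolynomiallyBoundedOn (f + g) s := by
  obtain ⟨p, hp⟩ := hf
  obtain ⟨q, hq⟩ := hg
  exact ⟨p + q, fun z hz => by
    simpa using (norm_add_le _ _).trans (add_le_add (hp z hz) (hq z hz))⟩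

theorem mul (hf : PolynomiallyBoundedOn f s) (hg : PolynomiallyBoundedOn g s) :
    PolynomiallyBoundedOn (f * g) s := by
  obtain ⟨p, hp⟩ := hf
  obtain ⟨q, hq⟩ := hg
  exact ⟨p * q, fun z hz => by
    simpa using mul_le_mul (hp z hz) (hq z hz) (norm_nonneg _) ((norm_nonneg _).trans (hp z hz))⟩

theorem of_norm_le (M : ℝ) (hf : ∀ z ∈ s, ‖f z‖ ≤ M) : PolynomiallyBoundedOn f s :=
  ⟨C M, fun z hz => by simpa using hf z hz⟩

theorem sum {ι : Type*} {F : ι → ℂ → ℂ} (I : Finset ι)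
    (hF : ∀ i ∈ I, PolynomiallyBoundedOn (F i) s) : PolynomiallyBoundedOn (∑ i ∈ I, F i) s :=
  Finset.sum_induction F (PolynomiallyBoundedOn · s) (fun _ _ => add)
    (of_norm_le 0 fun _ _ => by simp) hF

theorem conj_conj (hf : PolynomiallyBoundedOn f s) (hs : ∀ z ∈ s, conj z ∈ s) :
    PolynomiallyBoundedOn (fun z => conj (f (conj z))) s :=
  hf.imp fun q hq z hz => by simpa using hq (conj z) (hs z hz)

theorem congr (hf : PolynomiallyBoundedOn f s) (h : EqOn g f s) : PolynomiallyBoundedOn g s :=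
  hf.imp fun _ hq z hz => (h hz).symm ▸ hq z hz

theorem of_iUnion_eq_univ {ι : Type*} [Finite ι] {V : ι → Set ℂ} (hV : ⋃ i, V i = univ)
    (hf : ∀ i, PolynomiallyBoundedOn f (V i)) : PolynomiallyBoundedOn f s := by
  have := Fintype.ofFinite ι
  choose q hq using hf
  have le_sq (x : ℝ) : x ≤ x ^ 2 + 1 := by nlinarith [sq_nonneg (x - 1)]
  refine ⟨∑ i, (q i ^ 2 + 1), fun z _ => ?_⟩
  obtain ⟨i, hi⟩ := mem_iUnion.1 (hV.symm ▸ mem_univ z)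
  simp only [eval_finsetSum, eval_add, eval_pow, eval_one]
  exact (hq i z hi).trans <| (le_sq _).trans <| Finset.single_le_sum
    (f := fun i => (q i).eval ‖z‖ ^ 2 + 1) (fun j _ => by positivity) (Finset.mem_univ i)

end PolynomiallyBoundedOn

theorem tendsto_eval_div_pow_atTop_nhds_zero (q : ℝ[X]) {n : ℕ} (hn : q.natDegree < n) :
    Tendsto (fun R : ℝ => q.eval R / R ^ n) atTop (𝓝 0) := by
  simpa using q.div_tendsto_atTop_zero_of_degree_lt (X ^ n)
    (degree_lt_degree (by simpa using hn))

theorem iteratedDeriv_eq_zero_of_norm_le_eval {f : ℂ → ℂ} (hf : Differentiable ℂ f) {q : ℝ[X]}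
    (hq : ∀ z, ‖f z‖ ≤ q.eval ‖z‖) {n : ℕ} (hn : q.natDegree < n) : iteratedDeriv n f 0 = 0 := by
  have cauchy : ∀ R : ℝ, 0 < R → ‖iteratedDeriv n f 0‖ ≤ n.factorial * (q.eval R / R ^ n) := by
    intro R hR
    rw [← mul_div_assoc]
    refine Complex.norm_iteratedDeriv_le_of_forall_mem_sphere_norm_le n hR hf.diffContOnCl
      fun z hz => ?_
    rw [← mem_sphere_zero_iff_norm.mp hz]
    exact hq z
  have lim := (tendsto_eval_div_pow_atTop_nhds_zero q hn).const_mul (n.factorial : ℝ)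
  rw [mul_zero] at lim
  exact norm_le_zero_iff.mp (ge_of_tendsto lim ((eventually_gt_atTop 0).mono cauchy))

theorem exists_eval_eq_of_polynomiallyBoundedOn {f : ℂ → ℂ} (hf : Differentiable ℂ f)
    (hb : PolynomiallyBoundedOn f univ) : ∃ p : ℂ[X], ∀ z, f z = p.eval z := by
  obtain ⟨q, hq⟩ := hb
  refine ⟨∑ n ∈ Finset.range (q.natDegree + 1),
    C ((n.factorial : ℂ)⁻¹ * iteratedDeriv n f 0) * X ^ n, fun z => ?_⟩
  rw [← Complex.taylorSeries_eq_of_entire' (c := 0) (z := z) hf,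
    tsum_eq_sum (s := Finset.range (q.natDegree + 1)) fun n hn => ?_]
  · simp [eval_finsetSum]
  · rw [iteratedDeriv_eq_zero_of_norm_le_eval hf (fun z => hq z trivial) (by simpa using hn)]
    simp

theorem exists_map_ofReal_eq {p : ℂ[X]} {S : Set ℝ} (hS : S.Infinite)
    (h : ∀ x ∈ S, conj (p.eval (x : ℂ)) = p.eval (x : ℂ)) :
    ∃ q : ℝ[X], q.map (algebraMap ℝ ℂ) = p := by
  have hp : p.map (starRingEnd ℂ) = p := by
    refine eq_of_infinite_eval_eq _ _ ((hS.image Complex.ofReal_injective.injOn).mono ?_)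
    rintro _ ⟨x, hx, rfl⟩
    have := eval_map_apply (starRingEnd ℂ) (p := p) (x : ℂ)
    rw [Complex.conj_ofReal] at this
    exact this.trans (h x hx)
  refine (mem_lifts p).mp ((lifts_iff_coeff_lifts p).mpr fun n => ⟨(p.coeff n).re, ?_⟩)
  exact Complex.conj_eq_iff_re.mp (by rw [← coeff_map, hp])

theorem extendFrom_eqOn {X Y : Type*} [TopologicalSpace X] [TopologicalSpace Y] [T2Space Y]
    {f k : X → Y} {U V : Set X} (hU : Dense U) (hV : IsOpen V) (hk : ContinuousOn k V)
    (hkf : EqOn k f (U ∩ V)) : EqOn (extendFrom U f) k V := by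
  intro x hx
  refine extendFrom_eq (hU x) (((hk.continuousAt (hV.mem_nhds hx)).mono_left inf_le_left).congr' ?_)
  filter_upwards [self_mem_nhdsWithin, mem_nhdsWithin_of_mem_nhds (hV.mem_nhds hx)] with y hyU hyV
  exact hkf ⟨hyU, hyV⟩

theorem exists_tendsto_of_polynomiallyBoundedOn {f : ℂ → ℂ} {Z : Set ℂ} (hZ : Z.Finite)
    (hf : DifferentiableOn ℂ f Zᶜ) (hb : PolynomiallyBoundedOn f Zᶜ) (z : ℂ) :
    ∃ w, Tendsto f (𝓝[≠] z) (𝓝 w) := by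
  have punctured : ∀ᶠ w in 𝓝[≠] z, w ∈ Zᶜ := nhdsNE_le_cofinite z hZ.compl_mem_cofinite
  obtain ⟨q, hq⟩ := hb
  refine ⟨_, Complex.tendsto_limUnder_of_differentiable_on_punctured_nhds_of_bounded_under
    (punctured.mono fun w hw => hf.differentiableAt (hZ.isClosed.isOpen_compl.mem_nhds hw)) ?_⟩
  have bound : Tendsto (fun w : ℂ => q.eval ‖w‖ + ‖f z‖) (𝓝[≠] z) (𝓝 (q.eval ‖z‖ + ‖f z‖)) :=
    (Continuous.tendsto (by fun_prop) z).mono_left nhdsWithin_le_nhds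
  refine bound.isBoundedUnder_le.mono_le (punctured.mono fun w hw => ?_)
  exact (norm_sub_le _ _).trans (add_le_add_left (hq w hw) _)

theorem exists_eval_eqOn_compl_of_finite {f : ℂ → ℂ} {Z : Set ℂ} (hZ : Z.Finite)
    (hf : DifferentiableOn ℂ f Zᶜ) (hb : PolynomiallyBoundedOn f Zᶜ) :
    ∃ p : ℂ[X], ∀ z ∈ Zᶜ, f z = p.eval z := by
  have hopen : IsOpen Zᶜ := hZ.isClosed.isOpen_compl
  have hdense : Dense Zᶜ := hZ.countable.dense_compl ℂ
  have heq : EqOn (extendFrom Zᶜ f) f Zᶜ :=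
    extendFrom_eqOn hdense hopen hf.continuousOn fun _ _ => rfl
  have hcont : Continuous (extendFrom Zᶜ f) := by
    refine continuous_extendFrom hdense fun z => ?_
    by_cases hz : z ∈ Z
    · obtain ⟨w, hw⟩ := exists_tendsto_of_polynomiallyBoundedOn hZ hf hb z
      exact ⟨w, hw.mono_left (nhdsWithin_mono z fun x hx hxz => hx (by rwa [hxz]))⟩
    · exact ⟨f z, (hf z hz).continuousWithinAt⟩
  have hdiff : ∀ z ∈ Zᶜ, DifferentiableAt ℂ (extendFrom Zᶜ f) z := fun z hz =>
    (hf.congr heq).differentiableAt (hopen.mem_nhds hz)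
  have hentire : Differentiable ℂ (extendFrom Zᶜ f) := fun z =>
    (Complex.analyticAt_of_differentiable_on_punctured_nhds_of_continuousAt
      (Eventually.mono (nhdsNE_le_cofinite z hZ.compl_mem_cofinite) hdiff)
      hcont.continuousAt).differentiableAt
  obtain ⟨q, hq⟩ := hb
  have hbound : ∀ z, ‖extendFrom Zᶜ f z‖ ≤ q.eval ‖z‖ := hdense.induction
    (fun z hz => (heq hz).symm ▸ hq z hz) (isClosed_le (by fun_prop) (by fun_prop))
  obtain ⟨p, hp⟩ := exists_eval_eq_of_polynomiallyBoundedOn hentire ⟨q, fun z _ => hbound z⟩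
  exact ⟨p, fun z hz => (heq hz).symm.trans (hp z)⟩

theorem exists_eval_eqOn_of_locally_extends {f : ℂ → ℂ} {U Z : Set ℂ} (hU : Dense U)
    (hZ : Z.Finite) (hb : PolynomiallyBoundedOn f U)
    (hf : ∀ z ∉ Z, ∃ V, IsOpen V ∧ z ∈ V ∧ ∃ k, DifferentiableOn ℂ k V ∧ EqOn k f (U ∩ V)) :
    ∃ p : ℂ[X], ∀ z ∈ U \ Z, f z = p.eval z := by
  have heq : ∀ z ∈ U \ Z, extendFrom U f z = f z := by
    rintro z ⟨hzU, hzZ⟩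
    obtain ⟨V, hV, hzV, k, hk, hkf⟩ := hf z hzZ
    rw [extendFrom_eqOn hU hV hk.continuousOn hkf hzV, hkf ⟨hzU, hzV⟩]
  have hdiff : DifferentiableOn ℂ (extendFrom U f) Zᶜ := by
    intro z hz
    obtain ⟨V, hV, hzV, k, hk, hkf⟩ := hf z hz
    exact ((hk.congr (extendFrom_eqOn hU hV hk.continuousOn hkf)).differentiableAt
      (hV.mem_nhds hzV)).differentiableWithinAt
  obtain ⟨q, hq⟩ := hb
  have hbound : ∀ z ∈ Zᶜ, ‖extendFrom U f z‖ ≤ q.eval ‖z‖ := by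
    intro z hz
    obtain ⟨V, hV, hzV, k, hk, hkf⟩ := hf z hz
    rw [extendFrom_eqOn hU hV hk.continuousOn hkf hzV]
    have hk' : ContinuousAt k z := hk.continuousOn.continuousAt (hV.mem_nhds hzV)
    have hq' : Continuous fun w : ℂ => q.eval ‖w‖ := by fun_prop
    refine hk'.norm.continuousWithinAt.closure_le (hU.open_subset_closure_inter hV hzV)
      hq'.continuousWithinAt fun w hw => ?_
    rw [hkf hw.symm]
    exact hq w hw.2
  obtain ⟨p, hp⟩ := exists_eval_eqOn_compl_of_finite hZ hdiff ⟨q, hbound⟩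
  exact ⟨p, fun z hz => (heq z hz).symm.trans (hp z hz.2)⟩

end PolynomialGrowth

/-! ### Functions on the slit plane -/

/-- The complex plane minus, for each `i`, the closed vertical slit of half-length `ε` centred at
the real point `c i`. -/
def slitDomain {ι : Type*} (c : ι → ℝ) (ε : ℝ) : Set ℂ :=
  {z | ∀ i, z.re = c i → ε < |z.im|}

section SlitDomain

variable {ι : Type*} {c : ι → ℝ} {ε : ℝ}

theorem mem_slitDomain_of_re_notMem_range {z : ℂ} (hz : z.re ∉ range c) : z ∈ slitDomain c ε :=
  fun i hi => (hz ⟨i, hi.symm⟩).elim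

theorem conj_mem_slitDomain {z : ℂ} (hz : z ∈ slitDomain c ε) : conj z ∈ slitDomain c ε :=
  fun i hi => by simpa using hz i (by simpa using hi)

theorem dense_re_preimage_compl_range [Countable ι] (c : ι → ℝ) :
    Dense (Complex.re ⁻¹' (range c)ᶜ) :=
  ((countable_range c).dense_compl ℝ).preimage Complex.isOpenMap_re

theorem dense_slitDomain [Countable ι] : Dense (slitDomain c ε) :=
  (dense_re_preimage_compl_range c).mono fun _ => mem_slitDomain_of_re_notMem_range

theorem isOpen_slitDomain [Finite ι] : IsOpen (slitDomain c ε) := by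
  have : slitDomain c ε = ⋂ i, ({z : ℂ | z.re ≠ c i} ∪ {z : ℂ | ε < |z.im|}) := by
    ext z
    simp only [slitDomain, mem_ofPred_eq, mem_iInter, mem_union, imp_iff_not_or]
  rw [this]
  exact isOpen_iInter_of_finite fun i =>
    (isOpen_ne_fun Complex.continuous_re continuous_const).union
      (isOpen_lt continuous_const Complex.continuous_im.abs)

theorem isPreconnected_re_eq_or_lt_abs_im (x ε : ℝ) :
    IsPreconnected {z : ℂ | z.re = x ∨ ε < |z.im|} := by
  have line : IsPreconnected {z : ℂ | z.re = x} :=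
    ((convex_singleton x).linear_preimage Complex.reLm).isPreconnected
  have upper := (convex_halfSpace_im_gt ε).isPreconnected
  have lower := (convex_halfSpace_im_lt (-ε)).isPreconnected
  have h : {z : ℂ | z.re = x ∨ ε < |z.im|} =
      {z | ε < z.im} ∪ {z | z.re = x} ∪ {z | z.im < -ε} := by
    ext z
    simp only [mem_ofPred_eq, mem_union, lt_abs, lt_neg]
    tauto
  rw [h]
  refine (upper.union (⟨x, ε + 1⟩ : ℂ) ?_ ?_ line).union (⟨x, -ε - 1⟩ : ℂ) (Or.inr ?_) ?_ lower
  all_goals simp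

/-- Every vertical line avoiding the centres is joined to both half planes beyond the slits, and
the union of these connected sets is dense. -/
theorem isPreconnected_slitDomain [Countable ι] : IsPreconnected (slitDomain c ε) := by
  let s : ((range c)ᶜ : Set ℝ) → Set ℂ := fun x => {z | z.re = x ∨ ε < |z.im|}
  have hs : IsPreconnected (⋃ x, s x) := isPreconnected_iUnion
    ⟨⟨0, |ε| + 1⟩, mem_iInter.mpr fun x => Or.inr <| by
      rw [abs_of_pos (by positivity)]
      linarith [le_abs_self ε]⟩
    fun x => isPreconnected_re_eq_or_lt_abs_im x ε
  have hdense : Dense (⋃ x, s x) := (dense_re_preimage_compl_range c).mono fun z hz =>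
    mem_iUnion.mpr ⟨⟨z.re, hz⟩, Or.inl rfl⟩
  refine hs.subset_closure (iUnion_subset ?_) (hdense.closure_eq ▸ subset_univ _)
  rintro ⟨x, hx⟩ z (rfl | hz) i hi
  exacts [(hx ⟨i, hi.symm⟩).elim, hz]

theorem mem_slitDomain_iff_of_mem_ball (hc : Pairwise fun i j => 2 * ε ≤ |c i - c j|) {i : ι}
    {z : ℂ} (hz : z ∈ ball (c i : ℂ) ε) : z ∈ slitDomain c ε ↔ z.re ≠ c i := by
  rw [mem_ball, Complex.dist_eq] at hz
  have him : |z.im| < ε := by simpa using (Complex.abs_im_le_norm (z - c i)).trans_lt hz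
  have hre : |z.re - c i| < ε := by simpa using (Complex.abs_re_le_norm (z - c i)).trans_lt hz
  refine ⟨fun h hi => him.not_gt (h i hi), fun h j hj => ?_⟩
  obtain rfl | hij := eq_or_ne j i
  · exact (h hj).elim
  · have hji : 2 * ε ≤ |z.re - c i| := hj ▸ hc hij
    linarith [abs_nonneg (z.re - c i)]

theorem exists_mem_ball_of_notMem_slitDomain {z : ℂ} (hz : z ∉ slitDomain c ε) :
    ∃ i, z.re = c i ∧ (|z.im| = ε ∨ z ∈ ball (c i : ℂ) ε) := by
  simp only [slitDomain, mem_ofPred_eq, not_forall, not_lt] at hz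
  obtain ⟨i, hi, him⟩ := hz
  refine ⟨i, hi, him.eq_or_lt.imp id fun h => ?_⟩
  rwa [mem_ball, Complex.dist_of_re_eq (by simpa using hi), Complex.ofReal_im, Real.dist_0_eq_abs]

theorem finite_setOf_re_eq_and_abs_im_eq [Finite ι] (c : ι → ℝ) (ε : ℝ) :
    {z : ℂ | ∃ i, z.re = c i ∧ |z.im| = ε}.Finite := by
  refine (((finite_range c).prod (toFinite {ε, -ε})).image
    fun p => (⟨p.1, p.2⟩ : ℂ)).subset ?_
  rintro z ⟨i, hi, him⟩
  exact ⟨(z.re, z.im), ⟨⟨i, hi.symm⟩, eq_or_eq_neg_of_abs_eq him⟩, rfl⟩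

end SlitDomain

theorem differentiableOn_conj_conj {f : ℂ → ℂ} {U : Set ℂ} (hf : DifferentiableOn ℂ f U)
    (hU : IsOpen U) (hconj : ∀ z ∈ U, conj z ∈ U) :
    DifferentiableOn ℂ (fun z => conj (f (conj z))) U := fun z hz => by
  have h := (hf.differentiableAt (hU.mem_nhds (hconj z hz))).conj_conj
  rw [Complex.conj_conj] at h
  exact h.differentiableWithinAt

section Gluing

variable {a ε : ℝ} {f g f' g' : ℂ → ℂ}

/-- The right half of `f` and the left half of `g` glue to a holomorphic function on the disc of
radius `ε` around the real point `a`. -/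
def GluesAcross (a ε : ℝ) (f g : ℂ → ℂ) : Prop :=
  ∃ k, DifferentiableOn ℂ k (ball (a : ℂ) ε) ∧
    ∀ z ∈ ball (a : ℂ) ε, (a < z.re → k z = f z) ∧ (z.re < a → k z = g z)

namespace GluesAcross

theorem of_differentiableOn (hf : DifferentiableOn ℂ f (ball (a : ℂ) ε)) :
    GluesAcross a ε f f :=
  ⟨f, hf, fun _ _ => ⟨fun _ => rfl, fun _ => rfl⟩⟩

theorem add (h : GluesAcross a ε f g) (h' : GluesAcross a ε f' g') :
    GluesAcross a ε (f + f') (g + g') := by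
  obtain ⟨k, hk, hkz⟩ := h
  obtain ⟨k', hk', hkz'⟩ := h'
  refine ⟨k + k', hk.add hk', fun z hz => ⟨fun hr => ?_, fun hl => ?_⟩⟩
  · simp only [Pi.add_apply, (hkz z hz).1 hr, (hkz' z hz).1 hr]
  · simp only [Pi.add_apply, (hkz z hz).2 hl, (hkz' z hz).2 hl]

theorem mul (h : GluesAcross a ε f g) (h' : GluesAcross a ε f' g') :
    GluesAcross a ε (f * f') (g * g') := by
  obtain ⟨k, hk, hkz⟩ := h
  obtain ⟨k', hk', hkz'⟩ := h'
  refine ⟨k * k', hk.mul hk', fun z hz => ⟨fun hr => ?_, fun hl => ?_⟩⟩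
  · simp only [Pi.mul_apply, (hkz z hz).1 hr, (hkz' z hz).1 hr]
  · simp only [Pi.mul_apply, (hkz z hz).2 hl, (hkz' z hz).2 hl]

theorem sum {ι : Type*} {F F' : ι → ℂ → ℂ} (I : Finset ι)
    (h : ∀ i ∈ I, GluesAcross a ε (F i) (F' i)) :
    GluesAcross a ε (∑ i ∈ I, F i) (∑ i ∈ I, F' i) := by
  classical
  induction I using Finset.induction_on with
  | empty => exact of_differentiableOn (differentiableOn_const (0 : ℂ))
  | insert i I hi ih =>
    rw [Finset.sum_insert hi, Finset.sum_insert hi]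
    exact (h i (Finset.mem_insert_self i I)).add
      (ih fun j hj => h j (Finset.mem_insert_of_mem hj))

theorem congr (h : GluesAcross a ε f g) (hf : EqOn f' f (ball (a : ℂ) ε))
    (hg : EqOn g' g (ball (a : ℂ) ε)) : GluesAcross a ε f' g' :=
  h.imp fun _ ⟨hk, hkz⟩ => ⟨hk, fun z hz =>
    ⟨fun hr => ((hkz z hz).1 hr).trans (hf hz).symm,
      fun hl => ((hkz z hz).2 hl).trans (hg hz).symm⟩⟩

theorem conj_conj (h : GluesAcross a ε f g) :
    GluesAcross a ε (fun z => conj (f (conj z))) (fun z => conj (g (conj z))) := by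
  obtain ⟨k, hk, hkz⟩ := h
  have hball {z : ℂ} (hz : z ∈ ball (a : ℂ) ε) : conj z ∈ ball (a : ℂ) ε := by
    rwa [mem_ball, Complex.dist_conj_comm, Complex.conj_ofReal]
  refine ⟨fun z => conj (k (conj z)), differentiableOn_conj_conj hk isOpen_ball fun z => hball,
    fun z hz => ⟨fun hr => ?_, fun hl => ?_⟩⟩
  · exact congrArg conj ((hkz _ (hball hz)).1 (by simpa using hr))
  · exact congrArg conj ((hkz _ (hball hz)).2 (by simpa using hl))

end GluesAcross

theorem eqOn_zero_of_eqOn_zero_of_isOpen {U V : Set ℂ} (hU : IsOpen U) (hconn : IsPreconnected U)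
    (hf : DifferentiableOn ℂ f U) (hV : IsOpen V) (hUV : (U ∩ V).Nonempty)
    (h : ∀ z ∈ U ∩ V, f z = 0) : EqOn f 0 U := by
  obtain ⟨z, hzU, hzV⟩ := hUV
  refine (hf.analyticOnNhd hU).eqOn_zero_of_preconnected_of_eventuallyEq_zero hconn hzU ?_
  filter_upwards [(hU.inter hV).mem_nhds ⟨hzU, hzV⟩] with w hw using h w hw

theorem GluesAcross.left_eq_zero (h : GluesAcross a ε f g) (hε : 0 < ε)
    (hf : ∀ z ∈ ball (a : ℂ) ε, a < z.re → f z = 0) :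
    ∀ z ∈ ball (a : ℂ) ε, z.re < a → g z = 0 := by
  obtain ⟨k, hk, hkz⟩ := h
  have hk0 : EqOn k 0 (ball (a : ℂ) ε) := by
    refine eqOn_zero_of_eqOn_zero_of_isOpen isOpen_ball (convex_ball _ _).isPreconnected hk
      (isOpen_lt (continuous_const (y := a)) Complex.continuous_re) ⟨(a + ε / 2 : ℝ), ?_, ?_⟩
      fun z hz => ((hkz z hz.1).1 hz.2).trans (hf z hz.1 hz.2)
    · rw [mem_ball, Complex.dist_eq, ← Complex.ofReal_sub, Complex.norm_real, Real.norm_eq_abs,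
        add_sub_cancel_left, abs_of_pos (by positivity)]
      linarith
    · simpa using hε
  exact fun z hz hl => ((hkz z hz).2 hl).symm.trans (hk0 hz)

end Gluing

section SheetFamily

variable {G : Type*} [Group G] {c : G → ℝ} {ε : ℝ} {f g : G → ℂ → ℂ}

/-- A function on the real cover of the plane with group `G`, given by its restrictions `f σ` to
the sheets, which are copies of the slit plane: they are holomorphic of polynomial growth, they
are compatible with complex conjugation, and crossing the slit at `c i` from right to left leads
from sheet `σ` to sheet `σ * i`. -/
structure IsSheetFamily (c : G → ℝ) (ε : ℝ) (f : G → ℂ → ℂ) : Prop where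
  differentiableOn (σ : G) : DifferentiableOn ℂ (f σ) (slitDomain c ε)
  gluesAcross (i σ : G) : GluesAcross (c i) ε (f σ) (f (σ * i))
  polynomiallyBoundedOn (σ : G) : PolynomiallyBoundedOn (f σ) (slitDomain c ε)
  map_conj (σ : G) : ∀ z ∈ slitDomain c ε, f σ (conj z) = conj (f σ z)

namespace IsSheetFamily

theorem of_aeval (p : ℝ[X]) : IsSheetFamily c ε fun _ z => aeval z p where
  differentiableOn _ := p.differentiable_aeval.differentiableOn
  gluesAcross _ _ := .of_differentiableOn p.differentiable_aeval.differentiableOn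
  polynomiallyBoundedOn _ := .of_aeval p _
  map_conj _ z _ := aeval_conj p z

theorem add_conj [Finite G] (hd : ∀ σ, DifferentiableOn ℂ (f σ) (slitDomain c ε))
    (hg : ∀ i σ, GluesAcross (c i) ε (f σ) (f (σ * i)))
    (hb : ∀ σ, PolynomiallyBoundedOn (f σ) (slitDomain c ε)) :
    IsSheetFamily c ε fun σ => f σ + fun z => conj (f σ (conj z)) where
  differentiableOn σ := (hd σ).add <|
    differentiableOn_conj_conj (hd σ) isOpen_slitDomain fun _ => conj_mem_slitDomain
  gluesAcross i σ := (hg i σ).add (hg i σ).conj_conj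
  polynomiallyBoundedOn σ := (hb σ).add ((hb σ).conj_conj fun _ => conj_mem_slitDomain)
  map_conj σ z _ := by simp [add_comm]

theorem add (hf : IsSheetFamily c ε f) (hg : IsSheetFamily c ε g) :
    IsSheetFamily c ε (f + g) where
  differentiableOn σ := (hf.differentiableOn σ).add (hg.differentiableOn σ)
  gluesAcross i σ := (hf.gluesAcross i σ).add (hg.gluesAcross i σ)
  polynomiallyBoundedOn σ := (hf.polynomiallyBoundedOn σ).add (hg.polynomiallyBoundedOn σ)
  map_conj σ z hz := by simp [hf.map_conj σ z hz, hg.map_conj σ z hz]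

theorem mul (hf : IsSheetFamily c ε f) (hg : IsSheetFamily c ε g) :
    IsSheetFamily c ε (f * g) where
  differentiableOn σ := (hf.differentiableOn σ).mul (hg.differentiableOn σ)
  gluesAcross i σ := (hf.gluesAcross i σ).mul (hg.gluesAcross i σ)
  polynomiallyBoundedOn σ := (hf.polynomiallyBoundedOn σ).mul (hg.polynomiallyBoundedOn σ)
  map_conj σ z hz := by simp [hf.map_conj σ z hz, hg.map_conj σ z hz]

theorem leftTranslate (hf : IsSheetFamily c ε f) (τ : G) :
    IsSheetFamily c ε fun σ => f (τ * σ) where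
  differentiableOn σ := hf.differentiableOn _
  gluesAcross i σ := by simpa only [mul_assoc] using hf.gluesAcross i (τ * σ)
  polynomiallyBoundedOn σ := hf.polynomiallyBoundedOn _
  map_conj σ := hf.map_conj _

theorem eqOn_zero_of_eqOn_zero_one [Finite G] (hf : IsSheetFamily c ε f) (hε : 0 < ε)
    (hc : Pairwise fun i j => 2 * ε ≤ |c i - c j|) (h : EqOn (f 1) 0 (slitDomain c ε)) (σ : G) :
    EqOn (f σ) 0 (slitDomain c ε) := by
  have right : ∀ z ∈ ball (c σ : ℂ) ε, c σ < z.re → f 1 z = 0 := fun z hz hr =>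
    h ((mem_slitDomain_iff_of_mem_ball hc hz).mpr hr.ne')
  have left := (hf.gluesAcross σ 1).left_eq_zero hε right
  rw [one_mul] at left
  have hmem : ((c σ - ε / 2 : ℝ) : ℂ) ∈ ball (c σ : ℂ) ε := by
    rw [mem_ball, Complex.dist_eq, ← Complex.ofReal_sub, Complex.norm_real, Real.norm_eq_abs,
      sub_sub_cancel_left, abs_neg, abs_of_pos (by positivity)]
    linarith
  have hlt : ((c σ - ε / 2 : ℝ) : ℂ).re < c σ := by simpa using hε
  exact eqOn_zero_of_eqOn_zero_of_isOpen isOpen_slitDomain isPreconnected_slitDomain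
    (hf.differentiableOn σ)
    (isOpen_ball.inter (isOpen_lt Complex.continuous_re (continuous_const (y := c σ))))
    ⟨_, (mem_slitDomain_iff_of_mem_ball hc hmem).mpr hlt.ne, hmem, hlt⟩
    fun z hz => left z hz.2.1 hz.2.2

theorem eqOn_zero_or_eqOn_zero_of_mul [Finite G] (hf : IsSheetFamily c ε f)
    (hg : IsSheetFamily c ε g) (hε : 0 < ε) (hc : Pairwise fun i j => 2 * ε ≤ |c i - c j|)
    (h : ∀ z ∈ slitDomain c ε, f 1 z * g 1 z = 0) :
    (∀ σ, EqOn (f σ) 0 (slitDomain c ε)) ∨ ∀ σ, EqOn (g σ) 0 (slitDomain c ε) :=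
  (AnalyticOnNhd.eq_zero_or_eq_zero_of_mul_eq_zero
    ((hf.differentiableOn 1).analyticOnNhd isOpen_slitDomain)
    ((hg.differentiableOn 1).analyticOnNhd isOpen_slitDomain) h isPreconnected_slitDomain).imp
    (fun h σ => hf.eqOn_zero_of_eqOn_zero_one hε hc h σ)
    (fun h σ => hg.eqOn_zero_of_eqOn_zero_one hε hc h σ)

theorem exists_local_extension (hf : IsSheetFamily c ε f)
    (hc : Pairwise fun i j => 2 * ε ≤ |c i - c j|)
    (hinv : ∀ σ, EqOn (f σ) (f 1) (slitDomain c ε)) {z : ℂ} (hz : z ∉ slitDomain c ε)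
    (hz' : ¬∃ i, z.re = c i ∧ |z.im| = ε) :
    ∃ V, IsOpen V ∧ z ∈ V ∧ ∃ k, DifferentiableOn ℂ k V ∧ EqOn k (f 1) (slitDomain c ε ∩ V) := by
  obtain ⟨i, hi, him | hball⟩ := exists_mem_ball_of_notMem_slitDomain hz
  · exact (hz' ⟨i, hi, him⟩).elim
  obtain ⟨k, hk, hkz⟩ := hf.gluesAcross i 1
  refine ⟨ball (c i : ℂ) ε, isOpen_ball, hball, k, hk, fun w hw => ?_⟩
  obtain hl | hr := ((mem_slitDomain_iff_of_mem_ball hc hw.2).mp hw.1).lt_or_gt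
  · exact ((hkz w hw.2).2 hl).trans (hinv _ hw.1)
  · exact (hkz w hw.2).1 hr

theorem exists_aeval_eqOn_of_invariant [Finite G] (hf : IsSheetFamily c ε f)
    (hc : Pairwise fun i j => 2 * ε ≤ |c i - c j|)
    (hinv : ∀ σ, EqOn (f σ) (f 1) (slitDomain c ε)) :
    ∃ p : ℝ[X], ∀ z ∈ slitDomain c ε, f 1 z = aeval z p := by
  have hU : IsOpen (slitDomain c ε) := isOpen_slitDomain
  obtain ⟨p, hp⟩ := exists_eval_eqOn_of_locally_extends dense_slitDomain
    (finite_setOf_re_eq_and_abs_im_eq c ε) (hf.polynomiallyBoundedOn 1) fun z hz => by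
      by_cases hzU : z ∈ slitDomain c ε
      · exact ⟨_, hU, hzU, f 1, hf.differentiableOn 1, fun _ _ => rfl⟩
      · exact hf.exists_local_extension hc hinv hzU hz
  replace hp : ∀ z ∈ slitDomain c ε, f 1 z = p.eval z := fun z hz =>
    hp z ⟨hz, fun ⟨i, hi, him⟩ => (hz i hi).ne' him⟩
  obtain ⟨q, rfl⟩ := exists_map_ofReal_eq (finite_range c).infinite_compl fun x hx => by
    have hxU : (x : ℂ) ∈ slitDomain c ε := mem_slitDomain_of_re_notMem_range (by simpa using hx)
    rw [← hp x hxU, ← hf.map_conj 1 x hxU, Complex.conj_ofReal]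
  exact ⟨q, fun z hz => by rw [hp z hz, eval_map_algebraMap]⟩

end IsSheetFamily

/-- The sheet families, as an algebra of functions on all copies of the plane. -/
def sheetFamilySubalgebra (c : G → ℝ) (ε : ℝ) : Subalgebra ℝ (G → ℂ → ℂ) where
  carrier := {f | IsSheetFamily c ε f}
  add_mem' := .add
  mul_mem' := .mul
  algebraMap_mem' r := by simpa using! IsSheetFamily.of_aeval (c := c) (ε := ε) (C r)

/-- Restriction of a family of functions to the slit plane, on each sheet. -/
noncomputable def restrictSheets (c : G → ℝ) (ε : ℝ) :
    (G → ℂ → ℂ) →ₐ[ℝ] (G → slitDomain c ε → ℂ) where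
  toFun f σ z := f σ z
  map_one' := rfl
  map_mul' _ _ := rfl
  map_zero' := rfl
  map_add' _ _ := rfl
  commutes' _ := rfl

/-- The ring of functions on the cover: sheet families, identified when they agree on the slit
plane. -/
noncomputable def coverRing (c : G → ℝ) (ε : ℝ) : Subalgebra ℝ (G → slitDomain c ε → ℂ) :=
  (sheetFamilySubalgebra c ε).map (restrictSheets c ε)

/-- The function on the cover given by a sheet family. -/
noncomputable def IsSheetFamily.toCoverRing (hf : IsSheetFamily c ε f) : coverRing c ε :=
  ⟨restrictSheets c ε f, f, hf, rfl⟩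

namespace coverRing

theorem exists_toCoverRing_eq (x : coverRing c ε) :
    ∃ (f : G → ℂ → ℂ) (hf : IsSheetFamily c ε f), hf.toCoverRing = x :=
  let ⟨f, hf, hx⟩ := x.2
  ⟨f, hf, Subtype.ext hx⟩

theorem toCoverRing_inj (hf : IsSheetFamily c ε f) (hg : IsSheetFamily c ε g) :
    hf.toCoverRing = hg.toCoverRing ↔ ∀ σ, EqOn (f σ) (g σ) (slitDomain c ε) :=
  ⟨fun h σ z hz => congrFun (congrFun (congrArg Subtype.val h) σ) ⟨z, hz⟩,
    fun h => Subtype.ext (funext₂ fun σ z => h σ z.2)⟩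

/-- The deck transformations: `τ` acts on functions through left translation of the sheets, which
commutes with the right translations describing the crossings. -/
instance : MulSemiringAction G (coverRing c ε) where
  smul τ x := ⟨fun σ => x.1 (τ⁻¹ * σ), by
    obtain ⟨f, hf, rfl⟩ := exists_toCoverRing_eq x
    exact (hf.leftTranslate τ⁻¹).toCoverRing.2⟩
  one_smul x := Subtype.ext <| funext fun σ => by
    change x.1 (1⁻¹ * σ) = x.1 σ
    rw [inv_one, one_mul]
  mul_smul τ ρ x := Subtype.ext <| funext fun σ => by
    change x.1 ((τ * ρ)⁻¹ * σ) = x.1 (ρ⁻¹ * (τ⁻¹ * σ))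
    rw [mul_inv_rev, mul_assoc]
  smul_zero _ := rfl
  smul_add _ _ _ := rfl
  smul_one _ := rfl
  smul_mul _ _ _ := rfl

theorem smul_toCoverRing (hf : IsSheetFamily c ε f) (τ : G) :
    τ • hf.toCoverRing = (hf.leftTranslate τ⁻¹).toCoverRing := rfl

noncomputable instance : Algebra ℝ[X] (coverRing c ε) :=
  RingHom.toAlgebra
    { toFun p := (IsSheetFamily.of_aeval p).toCoverRing
      map_one' := Subtype.ext (funext₂ fun _ z => map_one (aeval (z : ℂ)))
      map_mul' p q := Subtype.ext (funext₂ fun _ z => map_mul (aeval (z : ℂ)) p q)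
      map_zero' := Subtype.ext (funext₂ fun _ z => map_zero (aeval (z : ℂ)))
      map_add' p q := Subtype.ext (funext₂ fun _ z => map_add (aeval (z : ℂ)) p q) }

theorem algebraMap_eq_toCoverRing (p : ℝ[X]) :
    algebraMap ℝ[X] (coverRing c ε) p = (IsSheetFamily.of_aeval p).toCoverRing := rfl

instance [Finite G] : FaithfulSMul ℝ[X] (coverRing c ε) := by
  rw [faithfulSMul_iff_algebraMap_injective]
  intro p q hpq
  refine eq_of_infinite_eval_eq p q
    ((finite_range c).infinite_compl.mono fun x hx => ?_)
  have hxU : (x : ℂ) ∈ slitDomain c ε := mem_slitDomain_of_re_notMem_range (by simpa using hx)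
  have h := (toCoverRing_inj (.of_aeval p) (.of_aeval q)).mp hpq 1 hxU
  simp only [← Complex.coe_algebraMap, aeval_algebraMap_apply_eq_algebraMap_eval] at h
  exact (algebraMap ℝ ℂ).injective h

instance : SMulCommClass G ℝ[X] (coverRing c ε) :=
  ⟨fun τ p x => by
    rw [Algebra.smul_def, Algebra.smul_def, smul_mul', algebraMap_eq_toCoverRing,
      smul_toCoverRing]⟩

theorem isDomain [Finite G] (hε : 0 < ε) (hc : Pairwise fun i j => 2 * ε ≤ |c i - c j|) :
    IsDomain (coverRing c ε) := by
  have : Nontrivial (coverRing c ε) := (FaithfulSMul.algebraMap_injective ℝ[X] _).nontrivial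
  have : NoZeroDivisors (coverRing c ε) := by
    refine ⟨fun {x y} hxy => ?_⟩
    obtain ⟨f, hf, rfl⟩ := exists_toCoverRing_eq x
    obtain ⟨g, hg, rfl⟩ := exists_toCoverRing_eq y
    have eq_zero {f : G → ℂ → ℂ} (hf : IsSheetFamily c ε f)
        (h : ∀ σ, EqOn (f σ) 0 (slitDomain c ε)) : hf.toCoverRing = 0 :=
      Subtype.ext (funext₂ fun σ z => h σ z.2)
    exact (hf.eqOn_zero_or_eqOn_zero_of_mul hg hε hc fun z hz =>
      congrFun (congrFun (congrArg Subtype.val hxy) 1) ⟨z, hz⟩).imp (eq_zero hf) (eq_zero hg)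
  exact NoZeroDivisors.to_isDomain _

theorem isInvariant [Finite G] (hc : Pairwise fun i j => 2 * ε ≤ |c i - c j|) :
    Algebra.IsInvariant ℝ[X] (coverRing c ε) G := by
  refine ⟨fun x hx => ?_⟩
  obtain ⟨f, hf, rfl⟩ := exists_toCoverRing_eq x
  have hinv (σ : G) : EqOn (f σ) (f 1) (slitDomain c ε) := by
    simpa using (toCoverRing_inj (hf.leftTranslate _) hf).mp (hx σ⁻¹) 1
  obtain ⟨p, hp⟩ := hf.exists_aeval_eqOn_of_invariant hc hinv
  exact ⟨p, (toCoverRing_inj (.of_aeval p) hf).mpr fun σ z hz =>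
    (hp z hz).symm.trans (hinv σ hz).symm⟩

theorem faithfulSMul (hf : IsSheetFamily c ε f)
    (hsep : ∀ σ ≠ 1, ¬EqOn (f σ) (f 1) (slitDomain c ε)) : FaithfulSMul G (coverRing c ε) := by
  refine ⟨fun {τ ρ} h => ?_⟩
  have h' : (ρ⁻¹ * τ) • hf.toCoverRing = hf.toCoverRing := by
    rw [mul_smul, h, inv_smul_smul]
  by_contra hne
  have := (toCoverRing_inj (hf.leftTranslate _) hf).mp h' 1
  refine hsep ((ρ⁻¹ * τ)⁻¹) ?_ (by simpa using this)
  simpa [inv_mul_eq_one] using hne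

end coverRing

end SheetFamily

theorem exists_isGalois_of_isSheetFamily {G : Type u} [Group G] [Finite G] {c : G → ℝ} {ε : ℝ}
    {f : G → ℂ → ℂ} (hf : IsSheetFamily c ε f) (hε : 0 < ε)
    (hc : Pairwise fun i j => 2 * ε ≤ |c i - c j|)
    (hsep : ∀ σ ≠ 1, ¬EqOn (f σ) (f 1) (slitDomain c ε)) :
    ∃ (N : Type u) (_ : Field N) (_ : Algebra (RatFunc ℝ) N),
      FiniteDimensional (RatFunc ℝ) N ∧ IsGalois (RatFunc ℝ) N ∧
        Nonempty (Gal(N/RatFunc ℝ) ≃* G) :=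
  have := coverRing.isDomain hε hc
  have : IsGaloisGroup G ℝ[X] (coverRing c ε) :=
    ⟨coverRing.faithfulSMul hf hsep, inferInstance, coverRing.isInvariant hc⟩
  exists_isGalois_of_isGaloisGroup G ℝ[X] (RatFunc ℝ) (coverRing c ε)

/-! ### Summable partial fractions -/

section EllOne

variable {α E : Type*} [NormedAddCommGroup E]

theorem summable_norm_ellOne (a : ℓ¹(α, E)) : Summable fun x => ‖a x‖ := by
  simpa using (lp.memℓp a).summable (by simp)

variable [NormedSpace ℂ E]

/-- The bounded operator on `ℓ¹(α, ℂ)` with prescribed bounded values on the standard basis. -/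
noncomputable def ellOneLift [CompleteSpace E] (v : α → E) {K : ℝ} (hK : 0 ≤ K)
    (hv : ∀ x, ‖v x‖ ≤ K) : ℓ¹(α, ℂ) →L[ℂ] E :=
  lp.tsumCLM ℂ α E ∘L lp.mapCLM 1 (fun x => ContinuousLinearMap.toSpanSingleton ℂ (v x)) hK
    fun x => by simpa using hv x

theorem ellOneLift_apply [CompleteSpace E] (v : α → E) {K : ℝ} (hK : 0 ≤ K)
    (hv : ∀ x, ‖v x‖ ≤ K) (a : ℓ¹(α, ℂ)) : ellOneLift v hK hv a = ∑' x, a x • v x := rfl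

theorem ellOneLift_single [CompleteSpace E] [DecidableEq α] (v : α → E) {K : ℝ} (hK : 0 ≤ K)
    (hv : ∀ x, ‖v x‖ ≤ K) (x : α) : ellOneLift v hK hv (lp.single 1 x 1) = v x := by
  rw [ellOneLift_apply, tsum_eq_single x fun y hy => by rw [lp.single_apply_ne _ _ _ hy, zero_smul],
    lp.single_apply_self, one_smul]

theorem ellOne_ext [DecidableEq α] {S T : ℓ¹(α, ℂ) →L[ℂ] E}
    (h : ∀ x, S (lp.single 1 x 1) = T (lp.single 1 x 1)) : S = T :=
  lp.ext_continuousLinearMap ENNReal.one_ne_top fun x => ContinuousLinearMap.ext_ring (h x)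

/-- The coordinate projection of `ℓ¹(α, E)` that keeps the coordinates in `s`. -/
noncomputable def ellOneRestrict (s : Set α) : ℓ¹(α, E) →L[ℂ] ℓ¹(α, E) :=
  lp.mapCLM 1 (s.indicator fun _ => ContinuousLinearMap.id ℂ E) zero_le_one fun x => by
    by_cases hx : x ∈ s
    · simpa [hx] using ContinuousLinearMap.norm_id_le
    · simp [hx]

theorem coe_ellOneRestrict (s : Set α) (a : ℓ¹(α, E)) : ⇑(ellOneRestrict s a) = s.indicator a := by
  ext x
  by_cases hx : x ∈ s <;> simp [ellOneRestrict, hx]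

end EllOne

section PartialFractions

variable {ι : Type*}

/-- Absolutely summable partial fractions with poles indexed by `ι`: the coordinate at `none` is the
constant term, the one at `some (i, m)` is the coefficient of `wᵢ ^ (m + 1)`, where `wᵢ` is the
reciprocal of `t - cᵢ` for the variable `t` and the `i`-th pole `cᵢ`. -/
abbrev PartialFractions (ι : Type*) : Type _ := ℓ¹(Option (ι × ℕ), ℂ)

namespace PartialFractions

instance (ι : Type*) : Nontrivial (PartialFractions ι) := by
  classical
  refine ⟨lp.single 1 none 1, 0, fun h => one_ne_zero (α := ℂ) ?_⟩
  simpa using congrArg (fun a : PartialFractions ι => a none) h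

/-- The value of a partial fraction basis vector when the basic fractions have values `w i`. -/
def monomial (w : ι → ℂ) : Option (ι × ℕ) → ℂ
  | none => 1
  | some (i, m) => w i ^ (m + 1)

theorem norm_monomial_le_one {w : ι → ℂ} (hw : ∀ i, ‖w i‖ ≤ 1) (x : Option (ι × ℕ)) :
    ‖monomial w x‖ ≤ 1 := by
  cases x with
  | none => simp [monomial]
  | some x => simpa [monomial] using pow_le_one₀ (norm_nonneg _) (hw x.1)

/-- The sum of the partial fraction series `a` when the basic fractions have values `w i`. -/
noncomputable def evalAt (w : ι → ℂ) (a : PartialFractions ι) : ℂ := ∑' x, a x * monomial w x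

/-- `evalAt` as a functional; it is bounded when the basic fractions lie in the unit disc. -/
noncomputable def evalCLM (w : ι → ℂ) (hw : ∀ i, ‖w i‖ ≤ 1) : PartialFractions ι →L[ℂ] ℂ :=
  ellOneLift (monomial w) zero_le_one (norm_monomial_le_one hw)

theorem evalCLM_apply (w : ι → ℂ) (hw : ∀ i, ‖w i‖ ≤ 1) (a : PartialFractions ι) :
    evalCLM w hw a = evalAt w a := rfl

theorem evalAt_smul (w : ι → ℂ) (r : ℂ) (a : PartialFractions ι) :
    evalAt w (r • a) = r * evalAt w a := by
  simp only [evalAt, lp.coeFn_smul, Pi.smul_apply, smul_eq_mul, mul_assoc, tsum_mul_left]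

theorem norm_mul_monomial_le {w : ι → ℂ} (hw : ∀ i, ‖w i‖ ≤ 1) (a : PartialFractions ι)
    (x : Option (ι × ℕ)) : ‖a x * monomial w x‖ ≤ ‖a x‖ := by
  rw [norm_mul]
  exact mul_le_of_le_one_right (norm_nonneg _) (norm_monomial_le_one hw x)

theorem norm_evalAt_le {w : ι → ℂ} (hw : ∀ i, ‖w i‖ ≤ 1) (a : PartialFractions ι) :
    ‖evalAt w a‖ ≤ ‖a‖ := by
  calc ‖evalAt w a‖ ≤ ∑' x, ‖a x‖ :=
        tsum_of_norm_bounded (summable_norm_ellOne a).hasSum (norm_mul_monomial_le hw a)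
    _ = ‖a‖ := by simp [lp.norm_eq_tsum_rpow (p := 1) (by simp) a]

theorem differentiableOn_evalAt {V : Set ℂ} (hV : IsOpen V) {w : ℂ → ι → ℂ}
    (hw : ∀ t ∈ V, ∀ i, ‖w t i‖ ≤ 1) (hd : ∀ i, DifferentiableOn ℂ (fun t => w t i) V)
    (a : PartialFractions ι) : DifferentiableOn ℂ (fun t => evalAt (w t) a) V := by
  refine Complex.differentiableOn_tsum_of_summable_norm (summable_norm_ellOne a) (fun x => ?_) hV
    fun x t ht => norm_mul_monomial_le (hw t ht) a x
  cases x with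
  | none => exact (differentiableOn_const 1).const_mul _
  | some x => exact ((hd x.1).pow _).const_mul _

theorem tendsto_evalAt [Finite ι] {X : Type*} {l : Filter X} {w : X → ι → ℂ}
    (hw : Tendsto w l (𝓝 0)) (a : PartialFractions ι) :
    Tendsto (fun t => evalAt (w t) a) l (𝓝 (a none)) := by
  classical
  have hwi (i : ι) : Tendsto (fun t => w t i) l (𝓝 0) := tendsto_pi_nhds.1 hw i
  have hbound (i : ι) : ∀ᶠ t in l, ‖w t i‖ ≤ 1 :=
    (hwi i).norm.eventually_le_const (by simp)
  rw [← tsum_ite_eq none fun _ => a none]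
  refine tendsto_tsum_of_dominated_convergence (summable_norm_ellOne a) (fun x => ?_)
    ((eventually_all.2 hbound).mono fun t ht => norm_mul_monomial_le ht a)
  cases x with
  | none => simpa [monomial] using tendsto_const_nhds
  | some x => simpa [monomial] using ((hwi x.1).pow (x.2 + 1)).const_mul (a (some x))

theorem evalAt_update [DecidableEq ι] (w : ι → ℂ) {i : ι} {a : PartialFractions ι}
    (ha : ∀ m, a (some (i, m)) = 0) (z : ℂ) : evalAt (Function.update w i z) a = evalAt w a := by
  refine tsum_congr fun x => ?_
  match x with
  | none => rfl
  | some (j, m) =>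
    obtain rfl | hj := eq_or_ne j i
    · simp [ha]
    · simp [monomial, hj]

/-- The projection of a partial fraction series to its part with pole at `i`. -/
noncomputable def principalPart (i : ι) : PartialFractions ι →L[ℂ] PartialFractions ι :=
  ellOneRestrict (range fun m => some (i, m))

theorem principalPart_apply_none (i : ι) (a : PartialFractions ι) : principalPart i a none = 0 := by
  simp [principalPart, coe_ellOneRestrict]

theorem principalPart_apply_some (i : ι) (a : PartialFractions ι) (m : ℕ) :
    principalPart i a (some (i, m)) = a (some (i, m)) := by
  simp [principalPart, coe_ellOneRestrict]

theorem principalPart_apply_some_of_ne {i j : ι} (h : j ≠ i) (a : PartialFractions ι) (m : ℕ) :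
    principalPart j a (some (i, m)) = 0 := by
  simp [principalPart, coe_ellOneRestrict, h]

theorem principalPart_eq_zero_iff (i : ι) (a : PartialFractions ι) :
    principalPart i a = 0 ↔ ∀ m, a (some (i, m)) = 0 := by
  refine ⟨fun h m => ?_, fun h => lp.ext ?_⟩
  · rw [← principalPart_apply_some, h, lp.coeFn_zero, Pi.zero_apply]
  · rw [principalPart, coe_ellOneRestrict, lp.coeFn_zero, indicator_eq_zero']
    exact disjoint_left.2 fun x hx => by rintro ⟨m, rfl⟩; exact hx (h m)

theorem apply_none_of_add_sum_principalPart_eq [Fintype ι] {f e : PartialFractions ι}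
    {h : ι → PartialFractions ι} (hf : f + ∑ i, principalPart i (h i - f) = e) :
    f none = e none := by
  rw [← hf, lp.coeFn_add, lp.coeFn_sum, Pi.add_apply, Finset.sum_apply]
  simp only [principalPart_apply_none, Finset.sum_const_zero, add_zero]

theorem apply_some_of_add_sum_principalPart_eq [Fintype ι] {f e : PartialFractions ι}
    {h : ι → PartialFractions ι} (hf : f + ∑ i, principalPart i (h i - f) = e) (i : ι) (l : ℕ) :
    h i (some (i, l)) = e (some (i, l)) := by
  rw [← hf, lp.coeFn_add, lp.coeFn_sum, Pi.add_apply, Finset.sum_apply,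
    Finset.sum_eq_single i (fun j _ hj => principalPart_apply_some_of_ne hj _ _) (by simp),
    principalPart_apply_some, lp.coeFn_sub, Pi.sub_apply, add_sub_cancel]

variable {c : ι → ℝ}

/-- The values `1 / (t - cᵢ)` of the basic fractions at `t`. -/
noncomputable def fractions (c : ι → ℝ) (t : ℂ) (i : ι) : ℂ := (t - c i)⁻¹

theorem norm_fractions_le_one {t : ℂ} {i : ι} (ht : 1 ≤ ‖t - c i‖) : ‖fractions c t i‖ ≤ 1 := by
  rw [fractions, norm_inv]
  exact inv_le_one_of_one_le₀ ht

variable [DecidableEq ι]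

/-- The expansion of `wᵢ * wⱼ ^ m` in partial fractions for `i ≠ j`, where `d` is the inverse of the
difference of the poles; the recursion comes from `wᵢ * wⱼ = d * (wᵢ - wⱼ)`. -/
noncomputable def mulPow (i j : ι) (d : ℂ) : ℕ → PartialFractions ι
  | 0 => lp.single 1 (some (i, 0)) 1
  | m + 1 => d • (mulPow i j d m - lp.single 1 (some (j, m)) 1)

theorem norm_mulPow_le_one (i j : ι) {d : ℂ} (hd : ‖d‖ ≤ 1 / 2) (m : ℕ) :
    ‖mulPow i j d m‖ ≤ 1 := by
  have hsingle (x : Option (ι × ℕ)) : ‖(lp.single 1 x 1 : PartialFractions ι)‖ = 1 := by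
    simp [lp.norm_single]
  induction m with
  | zero => exact (hsingle _).le
  | succ m ih =>
    calc ‖mulPow i j d (m + 1)‖
        ≤ ‖d‖ * (‖mulPow i j d m‖ + ‖(lp.single 1 (some (j, m)) 1 : PartialFractions ι)‖) := by
          rw [mulPow, norm_smul]
          gcongr
          exact norm_sub_le _ _
      _ ≤ 1 / 2 * (1 + 1) := by rw [hsingle]; gcongr
      _ = 1 := by norm_num

/-- The values of multiplication by `wᵢ = 1 / (t - cᵢ)` on the partial fraction basis. -/
noncomputable def mulFractionBasis (c : ι → ℝ) (i : ι) : Option (ι × ℕ) → PartialFractions ι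
  | none => lp.single 1 (some (i, 0)) 1
  | some (j, m) => if j = i then lp.single 1 (some (i, m + 1)) 1 else
      mulPow i j ((c i - c j : ℂ)⁻¹) (m + 1)

theorem norm_mulFractionBasis_le_one (hc : Pairwise fun i j => 2 ≤ |c i - c j|) (i : ι)
    (x : Option (ι × ℕ)) : ‖mulFractionBasis c i x‖ ≤ 1 := by
  match x with
  | none => simp [mulFractionBasis, lp.norm_single]
  | some (j, m) =>
    obtain rfl | hj := eq_or_ne j i
    · simp [mulFractionBasis, lp.norm_single]
    · rw [mulFractionBasis, if_neg hj]
      refine norm_mulPow_le_one i j ?_ _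
      rw [norm_inv, ← Complex.ofReal_sub, Complex.norm_real, Real.norm_eq_abs, one_div]
      exact inv_anti₀ two_pos (hc hj.symm)

/-- Multiplication by `wᵢ = 1 / (t - cᵢ)` on partial fraction series. -/
noncomputable def mulFraction (hc : Pairwise fun i j => 2 ≤ |c i - c j|) (i : ι) :
    PartialFractions ι →L[ℂ] PartialFractions ι :=
  ellOneLift (mulFractionBasis c i) zero_le_one (norm_mulFractionBasis_le_one hc i)

theorem evalCLM_single {w : ι → ℂ} (hw : ∀ i, ‖w i‖ ≤ 1) (x : Option (ι × ℕ)) :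
    evalCLM w hw (lp.single 1 x 1) = monomial w x :=
  ellOneLift_single _ _ _ x

theorem evalCLM_mulPow {w : ι → ℂ} (hw : ∀ i, ‖w i‖ ≤ 1) {i j : ι} {d : ℂ}
    (h : w i * w j = d * (w i - w j)) (m : ℕ) :
    evalCLM w hw (mulPow i j d m) = w i * w j ^ m := by
  induction m with
  | zero => simp [mulPow, evalCLM_single, monomial]
  | succ m ih =>
    rw [mulPow, map_smul, map_sub, ih, evalCLM_single, monomial, smul_eq_mul]
    linear_combination -w j ^ m * h

theorem evalAt_mulFraction (hc : Pairwise fun i j => 2 ≤ |c i - c j|) (i : ι) {t : ℂ}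
    (ht : ∀ j, 1 ≤ ‖t - c j‖) (a : PartialFractions ι) :
    evalAt (fractions c t) (mulFraction hc i a) =
      fractions c t i * evalAt (fractions c t) a := by
  have hw (j : ι) : ‖fractions c t j‖ ≤ 1 := norm_fractions_le_one (ht j)
  have hne (j : ι) : t - c j ≠ 0 := norm_pos_iff.1 (one_pos.trans_le (ht j))
  suffices h : evalCLM _ hw ∘L mulFraction hc i = fractions c t i • evalCLM _ hw from
    DFunLike.congr_fun h a
  refine ellOne_ext fun x => ?_
  rw [ContinuousLinearMap.comp_apply, mulFraction, ellOneLift_single, smul_apply,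
    evalCLM_single, smul_eq_mul]
  match x with
  | none => simp [mulFractionBasis, evalCLM_single, monomial]
  | some (j, m) =>
    obtain rfl | hj := eq_or_ne j i
    · simp [mulFractionBasis, evalCLM_single, monomial, pow_succ']
    · rw [mulFractionBasis, if_neg hj, evalCLM_mulPow, monomial]
      have hcc : (c i - c j : ℂ) ≠ 0 := by
        rw [← Complex.ofReal_sub, Complex.ofReal_ne_zero, ← abs_pos]
        exact two_pos.trans_le (hc hj.symm)
      have := hne i
      have := hne j
      simp only [fractions]
      field_simp
      ring

end PartialFractions

end PartialFractions

section FunctionalCalculus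

theorem exists_powerSeries_of_analyticAt {φ : ℂ → ℂ} (hφ : AnalyticAt ℂ φ 0) :
    ∃ (a : ℕ → ℂ) (r : ℝ), 0 < r ∧ a 0 = φ 0 ∧ Summable (fun k => ‖a k‖ * r ^ k) ∧
      ∀ u : ℂ, ‖u‖ < r → HasSum (fun k => a k * u ^ k) (φ u) := by
  obtain ⟨p, hp⟩ := hφ
  obtain ⟨δ, hδ, hsum⟩ := Metric.eventually_nhds_iff.1 (hasFPowerSeriesAt_iff.1 hp)
  simp only [zero_add, smul_eq_mul, dist_zero_right, mul_comm (_ ^ _)] at hsum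
  refine ⟨p.coeff, δ / 2, by positivity, ?_, ?_, fun u hu => hsum (hu.trans (half_lt_self hδ))⟩
  · exact hp.coeff_zero 1
  · have hhalf : ‖((δ / 2 : ℝ) : ℂ)‖ = δ / 2 := by
      rw [Complex.norm_real, Real.norm_of_nonneg (by positivity)]
    simpa only [norm_mul, norm_pow, hhalf] using
      (hsum (hhalf.trans_lt (half_lt_self hδ))).summable.norm

theorem norm_le_of_map_mul_eq {𝔄 : Type*} [NormedRing 𝔄] [NormedAlgebra ℂ 𝔄] [CompleteSpace 𝔄]
    [NormOneClass 𝔄] {T : 𝔄} {u : ℂ} {L : 𝔄 →ₗ[ℂ] ℂ} (hL : ∀ S, L (T * S) = u * L S)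
    (hL1 : L 1 ≠ 0) : ‖u‖ ≤ ‖T‖ := by
  refine spectrum.norm_le_norm_of_mem (spectrum.mem_iff.2 fun hunit => hL1 ?_)
  obtain ⟨S, hS⟩ := hunit.exists_right_inv
  rw [← hS, sub_mul, map_sub, hL, ← Algebra.smul_def, map_smul, smul_eq_mul, sub_self]

theorem exists_functionalCalculus {φ : ℂ → ℂ} (hφ : AnalyticAt ℂ φ 0) (𝔄 : Type*) [NormedRing 𝔄]
    [NormedAlgebra ℂ 𝔄] [CompleteSpace 𝔄] [NormOneClass 𝔄] :
    ∃ Φ : 𝔄 → 𝔄, Tendsto Φ (𝓝 0) (𝓝 (algebraMap ℂ 𝔄 (φ 0))) ∧ ∀ᶠ T in 𝓝 0,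
      ∀ (u : ℂ) (L : 𝔄 →L[ℂ] ℂ), (∀ S, L (T * S) = u * L S) → L (Φ T) = φ u * L 1 := by
  obtain ⟨a, r, hr, ha0, hsum, hφ⟩ := exists_powerSeries_of_analyticAt hφ
  have hbound (k : ℕ) {T : 𝔄} (hT : T ∈ ball 0 r) : ‖a k • T ^ k‖ ≤ ‖a k‖ * r ^ k := by
    rw [norm_smul]
    gcongr
    exact (norm_pow_le T k).trans (by gcongr; exact (mem_ball_zero_iff.1 hT).le)
  refine ⟨fun T => ∑' k, a k • T ^ k, ?_, ?_⟩
  · have hcont : ContinuousOn (fun T : 𝔄 => ∑' k, a k • T ^ k) (ball 0 r) :=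
      continuousOn_tsum (fun k => by fun_prop) hsum fun k T hT => hbound k hT
    have hzero : ∑' k, a k • (0 : 𝔄) ^ k = algebraMap ℂ 𝔄 (φ 0) := by
      rw [tsum_eq_single 0 fun k hk => by simp [hk], ha0, pow_zero, Algebra.algebraMap_eq_smul_one]
    exact hzero ▸ (hcont.continuousAt (ball_mem_nhds _ hr)).tendsto
  · filter_upwards [ball_mem_nhds _ hr] with T hT u L hL
    have hpow (k : ℕ) : L (T ^ k) = u ^ k * L 1 := by
      induction k with
      | zero => simp
      | succ k ih => rw [pow_succ', hL, ih, pow_succ', mul_assoc]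
    have hseries : HasSum (fun k => a k * u ^ k * L 1) (L (∑' k, a k • T ^ k)) := by
      have h := (Summable.of_norm_bounded hsum fun k => hbound k hT).hasSum.mapL L
      simpa only [map_smul, hpow, smul_eq_mul, mul_assoc] using h
    obtain hL1 | hL1 := eq_or_ne (L 1) 0
    · simpa [hL1] using hseries.unique (by simp [hL1])
    · have hu : ‖u‖ < r := (norm_le_of_map_mul_eq (L := L) hL hL1).trans_lt (by simpa using hT)
      exact hseries.unique ((hφ u hu).mul_right (L 1))

end FunctionalCalculus

section RootProjection

variable {k 𝔄 : Type*} [Field k] [Ring 𝔄] [Algebra k 𝔄]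

/-- For `r ^ n = 1` and a primitive `n`-th root of unity `η`, the projection to the eigenspace of
`r` for the eigenvalue `η⁻¹ ^ m`. -/
def rootProjection (r : 𝔄) (n : ℕ) (η : k) (m : ℕ) : 𝔄 :=
  (n : k)⁻¹ • ∑ j ∈ Finset.range n, (η ^ m • r) ^ j

theorem sum_rootProjection (r : 𝔄) {n : ℕ} {η : k} (hη : IsPrimitiveRoot η n) (hn : (n : k) ≠ 0) :
    ∑ m ∈ Finset.range n, rootProjection r n η m = 1 := by
  have hcoeff (j : ℕ) (hj : j ∈ Finset.range n) :
      ∑ m ∈ Finset.range n, (η ^ m • r) ^ j = if j = 0 then (n : k) • (1 : 𝔄) else 0 := by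
    simp only [_root_.smul_pow, ← pow_mul, mul_comm _ j]
    simp only [pow_mul, ← Finset.sum_smul]
    split_ifs with h0
    · simp [h0]
    · rw [geom_sum_eq (hη.pow_ne_one_of_pos_of_lt h0 (Finset.mem_range.1 hj)), ← pow_mul, mul_comm,
        pow_mul, hη.pow_eq_one, one_pow, sub_self, zero_div, zero_smul]
  have hpos : 0 < n := Nat.pos_of_ne_zero fun h => hn (by simp [h])
  simp only [rootProjection]
  rw [← Finset.smul_sum, Finset.sum_comm, Finset.sum_congr rfl hcoeff, Finset.sum_ite_eq',
    if_pos (Finset.mem_range.2 hpos), inv_smul_smul₀ hn]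

theorem mul_rootProjection {r : 𝔄} {n : ℕ} (hr : r ^ n = 1) {η : k} (hη : η ^ n = 1) (hη0 : η ≠ 0)
    (m : ℕ) : r * rootProjection r n η m = η⁻¹ ^ m • rootProjection r n η m := by
  have hpow : (η ^ m • r) ^ n = 1 := by
    rw [_root_.smul_pow, hr, ← pow_mul, mul_comm, pow_mul, hη, one_pow, one_smul]
  have hfix : (η ^ m • r) * rootProjection r n η m = rootProjection r n η m := by
    have hgeom := mul_geom_sum (η ^ m • r) n
    rw [hpow, sub_self, sub_mul, one_mul, sub_eq_zero] at hgeom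
    rw [rootProjection, mul_smul_comm, hgeom]
  rw [inv_pow, eq_inv_smul_iff₀ (pow_ne_zero m hη0), ← smul_mul_assoc, hfix]

end RootProjection

/-! ### The patching equation -/

section SlitQuotient

/-- The Möbius function of `z` with zero `iε` and pole `-iε`, whose real powers are the branches of
the covers of the plane ramified at `± iε`; it is homogeneous of degree zero in `(ε, z)`. -/
noncomputable def slitQuotient (ε z : ℂ) : ℂ := (z - ε * Complex.I) / (z + ε * Complex.I)

theorem slitQuotient_mul_inv_one (ε : ℂ) {z : ℂ} (hz : z ≠ 0) :
    slitQuotient (ε * z⁻¹) 1 = slitQuotient ε z := by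
  have hmul (w : ℂ) : z * (1 + w * z⁻¹ * Complex.I) = z + w * Complex.I := by field_simp
  have hneg := hmul (-ε)
  simp only [neg_mul, ← sub_eq_add_neg] at hneg
  rw [slitQuotient, slitQuotient, ← hmul, ← hneg, mul_div_mul_left _ _ hz]

theorem slitQuotient_zero_left {z : ℂ} (hz : z ≠ 0) : slitQuotient 0 z = 1 := by
  simp [slitQuotient, hz]

theorem analyticAt_slitQuotient_one_cpow (s : ℂ) :
    AnalyticAt ℂ (fun ε => slitQuotient ε 1 ^ s) 0 := by
  refine AnalyticAt.cpow ?_ analyticAt_const (by simp [slitQuotient])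
  refine AnalyticAt.div ?_ ?_ (by simp) <;> fun_prop

end SlitQuotient

section SheetOperators

theorem eventually_exists_patching {X α ι : Type*} [NormedAddCommGroup X] [NormedSpace ℂ X]
    [CompleteSpace X] [Fintype ι] {l : Filter α} {B : ι → α → X →L[ℂ] X}
    (hB : ∀ i, Tendsto (B i) l (𝓝 1)) (P : ι → X →L[ℂ] X) :
    ∀ᶠ ε in l, ∀ e, ∃ (f : X) (h : ι → X),
      (∀ i, B i ε (h i) = f) ∧ f + ∑ i, P i (h i - f) = e := by
  have hinv (i : ι) : Tendsto (fun ε => Ring.inverse (B i ε)) l (𝓝 1) := by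
    simpa [Function.comp_def] using
      (NormedRing.inverse_continuousAt (1 : (X →L[ℂ] X)ˣ)).tendsto.comp (hB i)
  have hS : Tendsto (fun ε => 1 + ∑ i, P i * (Ring.inverse (B i ε) - 1)) l (𝓝 1) := by
    simpa using tendsto_const_nhds.add (tendsto_finsetSum Finset.univ fun i _ =>
      ((hinv i).sub_const 1).const_mul (P i))
  have hunits : {S : X →L[ℂ] X | IsUnit S} ∈ 𝓝 1 := Units.isOpen.mem_nhds isUnit_one
  filter_upwards [hS hunits, eventually_all.2 fun i => hB i hunits] with ε hSε hBε e
  obtain ⟨T, hT⟩ := IsUnit.exists_right_inv hSε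
  refine ⟨T e, fun i => Ring.inverse (B i ε) (T e), fun i => ?_, ?_⟩
  · exact DFunLike.congr_fun (Ring.mul_inverse_cancel _ (hBε i)) (T e)
  · simpa using DFunLike.congr_fun hT e

variable {G E : Type*} [NormedAddCommGroup E] [NormedSpace ℂ E]

/-- The componentwise action of an operator on families indexed by `G`. -/
noncomputable def onSheets (G : Type*) (S : E →L[ℂ] E) : (G → E) →L[ℂ] (G → E) :=
  ContinuousLinearMap.piMap fun _ => S

theorem onSheets_apply (S : E →L[ℂ] E) (f : G → E) (σ : G) : onSheets G S f σ = S (f σ) := rfl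

variable [Group G]

/-- Right translation by `g` on families indexed by `G`. -/
noncomputable def rightTranslation (E : Type*) [NormedAddCommGroup E] [NormedSpace ℂ E] (g : G) :
    (G → E) →L[ℂ] (G → E) :=
  ContinuousLinearMap.pi fun σ => ContinuousLinearMap.proj (σ * g)

theorem rightTranslation_apply (g : G) (f : G → E) (σ : G) :
    rightTranslation E g f σ = f (σ * g) := rfl

theorem rightTranslation_pow (g : G) (k : ℕ) :
    rightTranslation E g ^ k = rightTranslation E (g ^ k) := by
  induction k with
  | zero => ext; simp [rightTranslation_apply]
  | succ k ih =>
    ext f σ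
    rw [pow_succ', mul_apply_eq_comp, ih, rightTranslation_apply,
      rightTranslation_apply, rightTranslation_apply, mul_assoc, pow_succ']

theorem commute_onSheets_rightTranslation (S : E →L[ℂ] E) (g : G) :
    Commute (onSheets G S) (rightTranslation E g) := rfl

/-- The projection, among families indexed by `G`, to the eigenspace of right translation by `i` for
the eigenvalue `exp (-2πi m / n)`, where `n` is the order of `i`. -/
noncomputable def monodromyProjection (E : Type*) [NormedAddCommGroup E] [NormedSpace ℂ E] (i : G)
    (m : ℕ) : (G → E) →L[ℂ] (G → E) :=
  rootProjection (rightTranslation E i) (orderOf i)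
    (Complex.exp (2 * Real.pi * Complex.I / orderOf i)) m

theorem sum_monodromyProjection {i : G} (hi : IsOfFinOrder i) :
    ∑ m ∈ Finset.range (orderOf i), monodromyProjection E i m = 1 := by
  have hn : orderOf i ≠ 0 := hi.orderOf_pos.ne'
  exact sum_rootProjection _ (Complex.isPrimitiveRoot_exp _ hn) (Nat.cast_ne_zero.2 hn)

theorem monodromyProjection_apply_mul {i : G} (hi : IsOfFinOrder i) (m : ℕ) (f : G → E) (σ : G) :
    monodromyProjection E i m f (σ * i) =
      Complex.exp (-(2 * Real.pi * Complex.I * (m / orderOf i))) •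
        monodromyProjection E i m f σ := by
  have hr : rightTranslation E i ^ orderOf i = 1 := by
    rw [rightTranslation_pow, pow_orderOf_eq_one]
    ext
    simp [rightTranslation_apply]
  have h := mul_rootProjection hr
    (Complex.isPrimitiveRoot_exp _ hi.orderOf_pos.ne').pow_eq_one (Complex.exp_ne_zero _) m
  rw [← Complex.exp_neg, ← Complex.exp_nat_mul, mul_neg, mul_div_left_comm] at h
  exact congrFun (DFunLike.congr_fun h f) σ

theorem commute_onSheets_monodromyProjection (S : E →L[ℂ] E) (i : G) (m : ℕ) :
    Commute (onSheets G S) (monodromyProjection E i m) :=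
  (Commute.sum_right _ _ _ fun _ _ =>
    ((commute_onSheets_rightTranslation S i).smul_right _).pow_right _).smul_right _

end SheetOperators

section Patching

open PartialFractions

variable {G : Type*} [Group G] {c : G → ℝ}

/-- A formal solution of the patching problem for the cover with sheets indexed by `G` and
monodromy `i` around the slit of half-length `ε` at `c i`: partial fraction series `sheet σ`, and
for each `i` a decomposition of `sheet σ` with branches of fractional powers of the Möbius functions
`slitQuotient ε (t - c i)` as coefficients, whose terms `part i m σ` have no pole at `c i`. -/
structure PatchingData (c : G → ℝ) (ε : ℝ) where
  sheet : G → PartialFractions G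
  part : G → ℕ → G → PartialFractions G
  sheet_one_none : sheet 1 none = 1
  sheet_none_of_ne (σ : G) (hσ : σ ≠ 1) : sheet σ none = 0
  part_apply_some (i : G) (m : ℕ) (σ : G) (l : ℕ) : part i m σ (some (i, l)) = 0
  part_mul (i : G) (m : ℕ) (σ : G) : part i m (σ * i) =
    Complex.exp (-(2 * Real.pi * Complex.I * (m / orderOf i))) • part i m σ
  evalAt_sheet (i σ : G) (t : ℂ) (ht : ∀ j, 1 ≤ ‖t - c j‖) :
    evalAt (fractions c t) (sheet σ) = ∑ m ∈ Finset.range (orderOf i),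
      slitQuotient ε (t - c i) ^ (m / orderOf i : ℂ) * evalAt (fractions c t) (part i m σ)

theorem exists_localOperator [Finite G] (hc : Pairwise fun i j => 2 ≤ |c i - c j|) (i : G) :
    ∃ B : ℝ → (G → PartialFractions G) →L[ℂ] (G → PartialFractions G), Tendsto B (𝓝 0) (𝓝 1) ∧
      ∀ᶠ ε in 𝓝 0, ∀ (h : G → PartialFractions G) (σ : G) (t : ℂ), (∀ j, 1 ≤ ‖t - c j‖) →
        evalAt (fractions c t) (B ε h σ) = ∑ m ∈ Finset.range (orderOf i),
          slitQuotient ε (t - c i) ^ (m / orderOf i : ℂ) *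
            evalAt (fractions c t) (monodromyProjection _ i m h σ) := by
  classical
  have := Fintype.ofFinite G
  set W := onSheets G (mulFraction hc i)
  have hW : Tendsto (fun ε : ℝ => (ε : ℂ) • W) (𝓝 0) (𝓝 0) := by
    have : Continuous fun ε : ℝ => (ε : ℂ) • W := by fun_prop
    simpa using this.tendsto 0
  choose Φ hΦ hΦL using fun m : ℕ => exists_functionalCalculus
    (analyticAt_slitQuotient_one_cpow (m / orderOf i))
    ((G → PartialFractions G) →L[ℂ] (G → PartialFractions G))
  simp only [slitQuotient_zero_left one_ne_zero, Complex.one_cpow, map_one] at hΦ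
  refine ⟨fun ε => ∑ m ∈ Finset.range (orderOf i),
    Φ m ((ε : ℂ) • W) * monodromyProjection _ i m, ?_, ?_⟩
  · rw [← sum_monodromyProjection (isOfFinOrder_of_finite i)]
    refine tendsto_finsetSum _ fun m _ => ?_
    simpa using ((hΦ m).comp hW).mul_const (monodromyProjection _ i m)
  · have hall : ∀ᶠ ε : ℝ in 𝓝 0, ∀ m ∈ Finset.range (orderOf i), _ :=
      (Finset.eventually_all _).2 fun m _ => hW.eventually (hΦL m)
    filter_upwards [hall] with ε hε h σ t ht
    have hw (j : G) : ‖fractions c t j‖ ≤ 1 := norm_fractions_le_one (ht j)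
    have hti : t - c i ≠ 0 := norm_pos_iff.1 (one_pos.trans_le (ht i))
    simp only [sum_apply, Finset.sum_apply, mul_apply_eq_comp]
    rw [← evalCLM_apply _ hw, map_sum]
    refine Finset.sum_congr rfl fun m hm => ?_
    let L := evalCLM _ hw ∘L ContinuousLinearMap.proj σ ∘L
      ContinuousLinearMap.apply ℂ (G → PartialFractions G) (monodromyProjection _ i m h)
    have key := hε m hm (ε * fractions c t i) L fun S => ?_
    · rwa [fractions, slitQuotient_mul_inv_one _ hti] at key
    · change evalCLM _ hw ((ε : ℂ) • mulFraction hc i _) = _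
      rw [map_smul, evalCLM_apply, evalAt_mulFraction hc i ht, smul_eq_mul, mul_assoc]
      rfl

theorem eventually_nonempty_patchingData [Finite G] (hc : Pairwise fun i j => 2 ≤ |c i - c j|) :
    ∀ᶠ ε in 𝓝 0, Nonempty (PatchingData c ε) := by
  classical
  have := Fintype.ofFinite G
  choose B hB hBeval using exists_localOperator hc
  filter_upwards [eventually_exists_patching hB fun i => onSheets G (principalPart i),
    eventually_all.2 hBeval] with ε hpatch heval
  obtain ⟨f, h, hBh, hf⟩ := hpatch (Pi.single 1 (lp.single 1 none 1))
  have hfσ (σ : G) := congrFun hf σ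
  simp only [Pi.add_apply, Finset.sum_apply, onSheets_apply, Pi.sub_apply] at hfσ
  have hpart (i σ : G) (l : ℕ) : h i σ (some (i, l)) = 0 := by
    rw [apply_some_of_add_sum_principalPart_eq (hfσ σ)]
    obtain rfl | hσ := eq_or_ne σ 1
    · simp
    · simp [hσ]
  have hprincipal (i : G) : onSheets G (principalPart i) (h i) = 0 :=
    funext fun σ => (principalPart_eq_zero_iff i (h i σ)).2 (hpart i σ)
  exact ⟨{
    sheet := f
    part := fun i m => monodromyProjection _ i m (h i)
    sheet_one_none := by simp [apply_none_of_add_sum_principalPart_eq (hfσ 1)]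
    sheet_none_of_ne := fun σ hσ => by
      simp [apply_none_of_add_sum_principalPart_eq (hfσ σ), hσ]
    part_apply_some := fun i m σ => (principalPart_eq_zero_iff i _).1 <| by
      have hcomm := DFunLike.congr_fun
        (commute_onSheets_monodromyProjection (principalPart i) i m).eq (h i)
      rw [mul_apply_eq_comp, mul_apply_eq_comp, hprincipal, map_zero] at hcomm
      exact congrFun hcomm σ
    part_mul := fun i m => monodromyProjection_apply_mul (isOfFinOrder_of_finite i) m (h i)
    evalAt_sheet := fun i σ t ht => by rw [← hBh i, heval i (h i) σ t ht] }⟩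

end Patching

/-! ### Branches of fractional powers -/

section Branches

variable {a ε : ℝ} {z : ℂ}

theorem re_slitQuotient (ε : ℝ) (z : ℂ) : (slitQuotient ε z).re =
    (z.re ^ 2 + z.im ^ 2 - ε ^ 2) / Complex.normSq (z + ε * Complex.I) := by
  rw [slitQuotient, Complex.div_re]
  simp
  ring

theorem im_slitQuotient (ε : ℝ) (z : ℂ) : (slitQuotient ε z).im =
    -(2 * ε * z.re) / Complex.normSq (z + ε * Complex.I) := by
  rw [slitQuotient, Complex.div_im]
  simp
  ring

theorem add_mul_I_ne_zero (hε : 0 ≤ ε) (hz : z.re = 0 → |z.im| ≠ ε) :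
    z + ε * Complex.I ≠ 0 := by
  intro h
  have hre : z.re = 0 := by simpa using congrArg Complex.re h
  have him : z.im + ε = 0 := by simpa using congrArg Complex.im h
  exact hz hre (by rw [eq_neg_of_add_eq_zero_left him, abs_neg, abs_of_nonneg hε])

theorem slitQuotient_mem_slitPlane (hε : 0 < ε) (hz : z.re = 0 → ε < |z.im|) :
    slitQuotient ε z ∈ Complex.slitPlane := by
  have hden : 0 < Complex.normSq (z + ε * Complex.I) :=
    Complex.normSq_pos.2 (add_mul_I_ne_zero hε.le fun h => (hz h).ne')
  rw [Complex.mem_slitPlane_iff, re_slitQuotient, im_slitQuotient]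
  refine (em (z.re = 0)).imp (fun h => div_pos ?_ hden) fun h => div_ne_zero ?_ hden.ne'
  · have : ε ^ 2 < z.im ^ 2 := sq_lt_sq.2 (by rw [abs_of_pos hε]; exact hz h)
    nlinarith [sq_nonneg z.re]
  · simp [h, hε.ne']

theorem differentiableAt_slitQuotient (hz : z + ε * Complex.I ≠ 0) :
    DifferentiableAt ℂ (slitQuotient ε) z :=
  DifferentiableAt.div (by fun_prop) (by fun_prop) hz

theorem differentiableAt_slitQuotient_cpow (hε : 0 < ε) (hz : z.re = 0 → ε < |z.im|) (s : ℂ) :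
    DifferentiableAt ℂ (fun z => slitQuotient ε z ^ s) z :=
  (differentiableAt_slitQuotient (add_mul_I_ne_zero hε.le fun h => (hz h).ne')).cpow_const
    (slitQuotient_mem_slitPlane hε hz)

theorem add_mul_I_ne_zero_of_norm_lt (hz : ‖z‖ < ε) : z + ε * Complex.I ≠ 0 :=
  add_mul_I_ne_zero ((norm_nonneg z).trans hz.le) fun _ =>
    ((Complex.abs_im_le_norm z).trans_lt hz).ne

theorem neg_slitQuotient_mem_slitPlane (hz : ‖z‖ < ε) :
    -slitQuotient ε z ∈ Complex.slitPlane := by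
  refine Or.inl ?_
  rw [Complex.neg_re, re_slitQuotient, neg_pos]
  refine div_neg_of_neg_of_pos ?_ (Complex.normSq_pos.2 (add_mul_I_ne_zero_of_norm_lt hz))
  have : ‖z‖ ^ 2 < ε ^ 2 := pow_lt_pow_left₀ hz (norm_nonneg z) two_ne_zero
  rw [Complex.sq_norm, Complex.normSq_apply] at this
  linarith

theorem neg_cpow_mul_exp_of_im_neg {u : ℂ} (hu : u.im < 0) (s : ℂ) :
    (-u) ^ s * Complex.exp (-(Real.pi * Complex.I * s)) = u ^ s := by
  have hu0 : u ≠ 0 := by rintro rfl; simp at hu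
  rw [Complex.cpow_def_of_ne_zero hu0, Complex.cpow_def_of_ne_zero (neg_ne_zero.2 hu0),
    ← Complex.exp_add, Complex.log, Complex.log, norm_neg,
    Complex.arg_neg_eq_arg_add_pi_of_im_neg hu, Complex.ofReal_add]
  ring_nf

theorem neg_cpow_mul_exp_of_im_pos {u : ℂ} (hu : 0 < u.im) (s : ℂ) :
    (-u) ^ s * Complex.exp (-(Real.pi * Complex.I * s)) =
      Complex.exp (-(2 * Real.pi * Complex.I * s)) * u ^ s := by
  have hu0 : u ≠ 0 := by rintro rfl; simp at hu
  rw [Complex.cpow_def_of_ne_zero hu0, Complex.cpow_def_of_ne_zero (neg_ne_zero.2 hu0),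
    ← Complex.exp_add, ← Complex.exp_add, Complex.log, Complex.log, norm_neg,
    Complex.arg_neg_eq_arg_sub_pi_of_im_pos hu, Complex.ofReal_sub]
  ring_nf

theorem gluesAcross_slitQuotient_cpow (hε : 0 < ε) (s : ℂ) :
    GluesAcross a ε (fun z => slitQuotient ε (z - a) ^ s)
      fun z => Complex.exp (-(2 * Real.pi * Complex.I * s)) * slitQuotient ε (z - a) ^ s := by
  have hball {z : ℂ} (hz : z ∈ ball (a : ℂ) ε) : ‖z - a‖ < ε := mem_ball_iff_norm.1 hz
  have hden {z : ℂ} (hz : z ∈ ball (a : ℂ) ε) :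
      0 < Complex.normSq (z - a + ε * Complex.I) :=
    Complex.normSq_pos.2 (add_mul_I_ne_zero_of_norm_lt (hball hz))
  refine ⟨fun z => (-slitQuotient ε (z - a)) ^ s * Complex.exp (-(Real.pi * Complex.I * s)),
    fun z hz => ?_, fun z hz => ⟨fun hr => neg_cpow_mul_exp_of_im_neg ?_ s,
      fun hl => neg_cpow_mul_exp_of_im_pos ?_ s⟩⟩
  · have hu : DifferentiableAt ℂ (fun z => -slitQuotient ε (z - a)) z :=
      ((differentiableAt_slitQuotient (add_mul_I_ne_zero_of_norm_lt (hball hz))).comp z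
        (differentiableAt_id.sub_const (a : ℂ))).neg
    exact ((hu.cpow_const (neg_slitQuotient_mem_slitPlane (hball hz))).mul_const
      _).differentiableWithinAt
  · rw [im_slitQuotient]
    refine div_neg_of_neg_of_pos (neg_neg_of_pos (mul_pos (by positivity) ?_)) (hden hz)
    simpa using hr
  · rw [im_slitQuotient]
    refine div_pos (neg_pos.2 (mul_neg_of_pos_of_neg (by positivity) ?_)) (hden hz)
    simpa using hl

theorem norm_cpow_le_one_add_norm (u : ℂ) {s : ℝ} (hs : 0 ≤ s) (hs' : s ≤ 1) :
    ‖u ^ (s : ℂ)‖ ≤ 1 + ‖u‖ := by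
  rw [Complex.norm_cpow_real]
  obtain h | h := le_total ‖u‖ 1
  · linarith [Real.rpow_le_one (norm_nonneg u) h hs, norm_nonneg u]
  · linarith [Real.rpow_le_self_of_one_le h hs']

theorem norm_mul_slitQuotient_cpow_le (ε z : ℂ) {s : ℝ} (hs : 0 ≤ s) (hs' : s ≤ 1) :
    ‖z + ε * Complex.I‖ * ‖slitQuotient ε z ^ (s : ℂ)‖ ≤
      ‖z + ε * Complex.I‖ + ‖z - ε * Complex.I‖ := by
  obtain h | h := eq_or_ne (z + ε * Complex.I) 0
  · simp [h]
  calc ‖z + ε * Complex.I‖ * ‖slitQuotient ε z ^ (s : ℂ)‖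
      ≤ ‖z + ε * Complex.I‖ * (1 + ‖slitQuotient ε z‖) := by
        gcongr
        exact norm_cpow_le_one_add_norm _ hs hs'
    _ = ‖z + ε * Complex.I‖ + ‖z - ε * Complex.I‖ := by
        rw [slitQuotient, norm_div, mul_add, mul_one, mul_div_cancel₀ _ (norm_ne_zero_iff.2 h)]

/-- The real polynomial whose roots are the end points `a ± iε` of a slit. -/
noncomputable def slitPolynomial (a ε : ℝ) : ℝ[X] := (X - C a) ^ 2 + C (ε ^ 2)

theorem aeval_slitPolynomial (a ε : ℝ) (z : ℂ) : aeval z (slitPolynomial a ε) =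
    (z - a - ε * Complex.I) * (z - a + ε * Complex.I) := by
  simp only [slitPolynomial, map_add, map_pow, map_sub, aeval_X, aeval_C, Complex.coe_algebraMap]
  linear_combination (ε : ℂ) ^ 2 * Complex.I_sq

theorem eval_slitPolynomial_pos (a : ℝ) (hε : 0 < ε) (x : ℝ) :
    0 < (slitPolynomial a ε).eval x := by
  simp only [slitPolynomial, eval_add, eval_pow, eval_sub, eval_X, eval_C]
  positivity

theorem polynomiallyBoundedOn_slitPolynomial_mul_cpow (a ε : ℝ) {s : ℝ} (hs : 0 ≤ s) (hs' : s ≤ 1)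
    (U : Set ℂ) : PolynomiallyBoundedOn
      (fun z => aeval z (slitPolynomial a ε) * slitQuotient ε (z - a) ^ (s : ℂ)) U := by
  have hfactor (w : ℂ) (hw : ‖w‖ = |ε|) (z : ℂ) : ‖z - a + w‖ ≤ ‖z‖ + |a| + |ε| := by
    calc ‖z - a + w‖ ≤ ‖z‖ + ‖(a : ℂ)‖ + ‖w‖ :=
          (norm_add_le _ _).trans (by gcongr; exact norm_sub_le _ _)
      _ = ‖z‖ + |a| + |ε| := by rw [hw, Complex.norm_real, Real.norm_eq_abs]
  have hplus := hfactor (ε * Complex.I) (by simp)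
  have hminus := hfactor (-(ε * Complex.I)) (by simp)
  simp only [← sub_eq_add_neg] at hminus
  refine ⟨(X + C |a| + C |ε|) * (2 * (X + C |a| + C |ε|)), fun z _ => ?_⟩
  simp only [aeval_slitPolynomial, mul_assoc, norm_mul, eval_mul, eval_add, eval_X, eval_C, two_mul]
  gcongr
  · exact hminus z
  · exact (norm_mul_slitQuotient_cpow_le _ _ hs hs').trans (add_le_add (hplus z) (hminus z))

end Branches

/-! ### Gluing the local solutions -/

section Patches

open PartialFractions

variable {ι : Type*} {c : ι → ℝ}

/-- A cover of the plane by the discs of radius `2` around the centres and, for `none`, the region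
at distance more than `1` from all centres. -/
def patch (c : ι → ℝ) : Option ι → Set ℂ
  | none => {t | ∀ j, 1 < ‖t - c j‖}
  | some i => ball (c i : ℂ) 2

theorem isOpen_patch [Finite ι] (c : ι → ℝ) (x : Option ι) : IsOpen (patch c x) := by
  cases x with
  | none =>
    simp only [patch, ofPred_forall]
    exact isOpen_iInter_of_finite fun j => isOpen_lt continuous_const (by fun_prop)
  | some i => exact isOpen_ball

theorem iUnion_patch (c : ι → ℝ) : ⋃ x, patch c x = univ := by
  refine eq_univ_of_forall fun t => mem_iUnion.2 ?_
  by_cases h : ∀ j, 1 < ‖t - c j‖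
  · exact ⟨none, h⟩
  · push Not at h
    obtain ⟨i, hi⟩ := h
    exact ⟨some i, mem_ball_iff_norm.2 (hi.trans_lt one_lt_two)⟩

theorem two_le_norm_sub_of_mem_patch_some (hc : Pairwise fun i j => 4 ≤ |c i - c j|) {i j : ι}
    (hij : i ≠ j) {t : ℂ} (ht : t ∈ patch c (some i)) : 2 ≤ ‖t - c j‖ := by
  have hcc : 4 ≤ ‖(c i - c j : ℂ)‖ := by
    rw [← Complex.ofReal_sub, Complex.norm_real]
    exact hc hij
  have htri := norm_sub_le_norm_sub_add_norm_sub (c i : ℂ) t (c j)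
  rw [norm_sub_rev (c i : ℂ) t] at htri
  linarith [mem_ball_iff_norm.1 ht]

open Classical in
/-- The values of the basic fractions on a patch, where the fraction with a pole in the patch is
replaced by zero. -/
noncomputable def patchFractions (c : ι → ℝ) : Option ι → ℂ → ι → ℂ
  | none, t => fractions c t
  | some i, t => Function.update (fractions c t) i 0

theorem norm_patchFractions_le_one (hc : Pairwise fun i j => 4 ≤ |c i - c j|) (x : Option ι) :
    ∀ t ∈ patch c x, ∀ j, ‖patchFractions c x t j‖ ≤ 1 := by
  intro t ht j
  match x with
  | none => exact norm_fractions_le_one (ht j).le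
  | some i =>
    obtain rfl | hij := eq_or_ne i j
    · simp [patchFractions]
    · classical
      rw [patchFractions, Function.update_of_ne hij.symm]
      exact norm_fractions_le_one <|
        one_le_two.trans (two_le_norm_sub_of_mem_patch_some hc hij ht)

theorem differentiableOn_patchFractions (hc : Pairwise fun i j => 4 ≤ |c i - c j|) (x : Option ι)
    (j : ι) : DifferentiableOn ℂ (fun t => patchFractions c x t j) (patch c x) := by
  have hfraction {U : Set ℂ} (hU : ∀ t ∈ U, 1 ≤ ‖t - c j‖) :
      DifferentiableOn ℂ (fun t => fractions c t j) U :=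
    (differentiableOn_id.sub_const (c j : ℂ)).inv fun t ht =>
      norm_pos_iff.1 (one_pos.trans_le (hU t ht))
  match x with
  | none => exact hfraction fun t ht => (ht j).le
  | some i =>
    obtain rfl | hij := eq_or_ne i j
    · simp [patchFractions]
    · classical
      simp only [patchFractions, Function.update_of_ne hij.symm]
      exact hfraction fun t ht =>
        one_le_two.trans (two_le_norm_sub_of_mem_patch_some hc hij ht)

theorem differentiableOn_evalAt_patchFractions [Finite ι]
    (hc : Pairwise fun i j => 4 ≤ |c i - c j|) (x : Option ι) (a : PartialFractions ι) :
    DifferentiableOn ℂ (fun t => evalAt (patchFractions c x t) a) (patch c x) :=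
  differentiableOn_evalAt (isOpen_patch c x) (norm_patchFractions_le_one hc x)
    (differentiableOn_patchFractions hc x) a

theorem polynomiallyBoundedOn_evalAt_patchFractions
    (hc : Pairwise fun i j => 4 ≤ |c i - c j|) (x : Option ι) (a : PartialFractions ι) :
    PolynomiallyBoundedOn (fun t => evalAt (patchFractions c x t) a) (patch c x) :=
  .of_norm_le ‖a‖ fun t ht => norm_evalAt_le (norm_patchFractions_le_one hc x t ht) a

theorem tendsto_fractions_cobounded (c : ι → ℝ) :
    Tendsto (fractions c) (Bornology.cobounded ℂ) (𝓝 0) :=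
  tendsto_pi_nhds.2 fun i => tendsto_inv₀_cobounded.comp (tendsto_sub_const_cobounded (c i : ℂ))

theorem exists_eqOn_of_eqOn_inter {α β : Type*} {V : ι → Set α} {g : ι → α → β}
    (hV : ⋃ i, V i = univ) (hg : ∀ i j, EqOn (g i) (g j) (V i ∩ V j)) :
    ∃ F, ∀ i, EqOn F (g i) (V i) := by
  choose i hi using fun t => mem_iUnion.1 (hV.symm ▸ mem_univ t)
  exact ⟨fun t => g (i t) t, fun j t ht => hg (i t) j ⟨hi t, ht⟩⟩

end Patches

namespace PatchingData

open PartialFractions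

variable {G : Type*} [Group G] {c : G → ℝ} {ε : ℝ} (D : PatchingData c ε)

/-- The expression for sheet `σ` on each patch. -/
noncomputable def localSheet (σ : G) : Option G → ℂ → ℂ
  | none => fun t => evalAt (patchFractions c none t) (D.sheet σ)
  | some i => ∑ m ∈ Finset.range (orderOf i),
      (fun t => slitQuotient ε (t - c i) ^ (m / orderOf i : ℂ)) *
        fun t => evalAt (patchFractions c (some i) t) (D.part i m σ)

theorem localSheet_some_eqOn (i σ : G) :
    EqOn (D.localSheet σ (some i)) (D.localSheet σ none) {t | ∀ j, 1 ≤ ‖t - c j‖} := fun t ht => by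
  classical
  simp only [localSheet, Finset.sum_apply, Pi.mul_apply, patchFractions, D.evalAt_sheet i σ t ht]
  exact Finset.sum_congr rfl fun m _ => by rw [evalAt_update _ (D.part_apply_some i m σ)]

theorem localSheet_eqOn (hc : Pairwise fun i j => 4 ≤ |c i - c j|) (σ : G) (x y : Option G) :
    EqOn (D.localSheet σ x) (D.localSheet σ y) (patch c x ∩ patch c y) := by
  have hnone {t : ℂ} (ht : t ∈ patch c none) (x : Option G) :
      D.localSheet σ x t = D.localSheet σ none t := by
    cases x with
    | none => rfl
    | some i => exact D.localSheet_some_eqOn i σ fun j => (ht j).le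
  rintro t ⟨hx, hy⟩
  match x, y with
  | none, y => exact (hnone hx y).symm
  | x, none => exact hnone hy x
  | some i, some j =>
    obtain rfl | hij := eq_or_ne i j
    · rfl
    · exact ((two_le_norm_sub_of_mem_patch_some hc hij hx).not_gt (mem_ball_iff_norm.1 hy)).elim

theorem differentiableOn_localSheet [Finite G] (hc : Pairwise fun i j => 4 ≤ |c i - c j|)
    (hε : 0 < ε) (σ : G) (x : Option G) :
    DifferentiableOn ℂ (D.localSheet σ x) (patch c x ∩ slitDomain c ε) := by
  match x with
  | none => exact (differentiableOn_evalAt_patchFractions hc none _).mono inter_subset_left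
  | some i =>
    refine DifferentiableOn.sum fun m _ => DifferentiableOn.mul (fun t ht => ?_)
      ((differentiableOn_evalAt_patchFractions hc (some i) _).mono inter_subset_left)
    have hslit : (t - c i).re = 0 → ε < |(t - c i).im| := fun h => by
      simpa using ht.2 i (by simpa [sub_eq_zero] using h)
    exact ((differentiableAt_slitQuotient_cpow hε hslit _).comp t
      (differentiableAt_id.sub_const (c i : ℂ))).differentiableWithinAt

theorem gluesAcross_localSheet [Finite G] (hc : Pairwise fun i j => 4 ≤ |c i - c j|) (hε : 0 < ε)
    (hε2 : ε ≤ 2) (i σ : G) :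
    GluesAcross (c i) ε (D.localSheet σ (some i)) (D.localSheet (σ * i) (some i)) := by
  refine (GluesAcross.sum (Finset.range (orderOf i)) fun m _ =>
    (gluesAcross_slitQuotient_cpow hε (m / orderOf i)).mul (.of_differentiableOn <|
      (differentiableOn_evalAt_patchFractions hc (some i) (D.part i m σ)).mono
        (ball_subset_ball hε2))).congr (fun t _ => rfl) fun t _ => ?_
  simp only [localSheet, Finset.sum_apply, Pi.mul_apply, D.part_mul, evalAt_smul]
  exact Finset.sum_congr rfl fun m _ => by ring

theorem polynomiallyBoundedOn_mul_localSheet [Fintype G]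
    (hc : Pairwise fun i j => 4 ≤ |c i - c j|) (σ : G) (x : Option G) :
    PolynomiallyBoundedOn
      ((fun t => aeval t (∏ i, slitPolynomial (c i) ε)) * D.localSheet σ x) (patch c x) := by
  classical
  match x with
  | none =>
    exact (PolynomiallyBoundedOn.of_aeval _ _).mul
      (polynomiallyBoundedOn_evalAt_patchFractions hc none _)
  | some i =>
    have hbranch (m : ℕ) (hm : m ∈ Finset.range (orderOf i)) :=
      polynomiallyBoundedOn_slitPolynomial_mul_cpow (c i) ε (s := m / orderOf i) (by positivity)
        (div_le_one_of_le₀ (by exact_mod_cast (Finset.mem_range.1 hm).le) (by positivity))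
        (patch c (some i))
    refine (PolynomiallyBoundedOn.sum _ fun m hm => ((PolynomiallyBoundedOn.of_aeval
      (∏ j ∈ Finset.univ.erase i, slitPolynomial (c j) ε) _).mul (hbranch m hm)).mul
        (polynomiallyBoundedOn_evalAt_patchFractions hc (some i) (D.part i m σ))).congr
          fun t _ => ?_
    rw [← Finset.prod_erase_mul _ _ (Finset.mem_univ i)]
    simp only [localSheet, Finset.sum_apply, Pi.mul_apply, Finset.mul_sum, map_mul,
      Complex.ofReal_div, Complex.ofReal_natCast, mul_assoc]

theorem exists_isSheetFamily [Fintype G] (hc : Pairwise fun i j => 4 ≤ |c i - c j|) (hε : 0 < ε)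
    (hε2 : ε ≤ 2) : ∃ f, IsSheetFamily c ε f ∧ ∀ σ, ∀ x : ℝ, (x : ℂ) ∈ patch c none → f σ x =
      (((∏ i, slitPolynomial (c i) ε).eval x * (2 * (D.localSheet σ none x).re) : ℝ) : ℂ) := by
  set Q := ∏ i, slitPolynomial (c i) ε
  have hQ : Differentiable ℂ fun z : ℂ => aeval z Q := Q.differentiable_aeval
  choose F hF using fun σ => exists_eqOn_of_eqOn_inter (iUnion_patch c) (D.localSheet_eqOn hc σ)
  refine ⟨_, .add_conj (f := fun σ => (fun z => aeval z Q) * F σ)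
    (fun σ => hQ.differentiableOn.mul fun z hz => ?_)
    (fun i σ => (GluesAcross.of_differentiableOn hQ.differentiableOn).mul ?_) fun σ => ?_,
    fun σ x hx => ?_⟩
  · obtain ⟨y, hy⟩ := mem_iUnion.1 ((iUnion_patch c).symm ▸ mem_univ z)
    exact (((D.differentiableOn_localSheet hc hε σ y).congr
      ((hF σ y).mono inter_subset_left)).differentiableAt
        (((isOpen_patch c y).inter isOpen_slitDomain).mem_nhds ⟨hy, hz⟩)).differentiableWithinAt
  · have hball : ball (c i : ℂ) ε ⊆ patch c (some i) := ball_subset_ball hε2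
    exact (D.gluesAcross_localSheet hc hε hε2 i σ).congr ((hF σ (some i)).mono hball)
      ((hF (σ * i) (some i)).mono hball)
  · exact .of_iUnion_eq_univ (iUnion_patch c) fun y =>
      (D.polynomiallyBoundedOn_mul_localSheet hc σ y).congr fun z hz =>
        congrArg (_ * ·) (hF σ y hz)
  · have hQx : aeval (x : ℂ) Q = Q.eval x := aeval_algebraMap_apply_eq_algebraMap_eval x Q
    simp only [Pi.add_apply, Pi.mul_apply, Complex.conj_ofReal, hQx, hF σ none hx, map_mul,
      ← mul_add, Complex.add_conj]
    push_cast
    rfl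

theorem tendsto_localSheet_none [Finite G] (σ : G) :
    Tendsto (fun x : ℝ => D.localSheet σ none x) atTop (𝓝 (D.sheet σ none)) :=
  (tendsto_evalAt (tendsto_fractions_cobounded c) (D.sheet σ)).comp
    (RCLike.tendsto_ofReal_atTop_cobounded ℂ)

theorem exists_isSheetFamily_separating [Finite G] (D : PatchingData c ε)
    (hc : Pairwise fun i j => 4 ≤ |c i - c j|) (hε : 0 < ε) (hε2 : ε ≤ 2) :
    ∃ f, IsSheetFamily c ε f ∧ ∀ σ ≠ 1, ¬EqOn (f σ) (f 1) (slitDomain c ε) := by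
  have := Fintype.ofFinite G
  obtain ⟨f, hf, hfreal⟩ := D.exists_isSheetFamily hc hε hε2
  refine ⟨f, hf, fun σ hσ heq => ?_⟩
  have hre : ∀ᶠ x : ℝ in atTop, (D.localSheet σ none x).re = (D.localSheet 1 none x).re := by
    filter_upwards [eventually_all.2 fun i => eventually_gt_atTop (c i + 1)] with x hx
    have hslit : (x : ℂ) ∈ slitDomain c ε := fun i hi => by
      linarith [hx i, show x = c i from hi]
    have hpatch : (x : ℂ) ∈ patch c none := fun i => by
      rw [← Complex.ofReal_sub, Complex.norm_real]
      exact (lt_sub_iff_add_lt'.2 (hx i)).trans_le (le_abs_self _)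
    have hQ : (∏ i, slitPolynomial (c i) ε).eval x ≠ 0 := by
      rw [eval_prod]
      exact (Finset.prod_pos fun i _ => eval_slitPolynomial_pos (c i) hε x).ne'
    have hx := heq hslit
    rw [hfreal σ x hpatch, hfreal 1 x hpatch, Complex.ofReal_inj] at hx
    exact mul_left_cancel₀ two_ne_zero (mul_left_cancel₀ hQ hx)
  have hlim (τ : G) := (Complex.continuous_re.tendsto _).comp (D.tendsto_localSheet_none τ)
  have hnone := tendsto_nhds_unique ((hlim σ).congr' hre) (hlim 1)
  simp [D.sheet_one_none, D.sheet_none_of_ne σ hσ] at hnone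

end PatchingData

theorem exists_isSheetFamily_separating (G : Type*) [Group G] [Finite G] :
    ∃ (c : G → ℝ) (ε : ℝ) (f : G → ℂ → ℂ), 0 < ε ∧ (Pairwise fun i j => 2 * ε ≤ |c i - c j|) ∧
      IsSheetFamily c ε f ∧ ∀ σ ≠ 1, ¬EqOn (f σ) (f 1) (slitDomain c ε) := by
  let c (i : G) : ℝ := 4 * (Finite.equivFin G i : ℕ)
  have hc : Pairwise fun i j => 4 ≤ |c i - c j| := fun i j hij => by
    have hne : ((Finite.equivFin G i : ℕ) : ℤ) - (Finite.equivFin G j : ℕ) ≠ 0 := by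
      simpa [sub_eq_zero, Fin.val_inj] using hij
    have hone : (1 : ℝ) ≤ |((Finite.equivFin G i : ℕ) : ℝ) - (Finite.equivFin G j : ℕ)| := by
      exact_mod_cast Int.one_le_abs hne
    dsimp only [c]
    rw [← mul_sub, abs_mul, abs_of_pos four_pos]
    linarith
  have hdata : ∀ᶠ ε in 𝓝[>] 0, Nonempty (PatchingData c ε) :=
    nhdsWithin_le_nhds (eventually_nonempty_patchingData
      fun i j hij => (by norm_num : (2 : ℝ) ≤ 4).trans (hc hij))
  obtain ⟨ε, ⟨D⟩, hε, hε2⟩ := (hdata.and (Ioo_mem_nhdsGT two_pos)).exists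
  obtain ⟨f, hf, hsep⟩ := D.exists_isSheetFamily_separating hc hε hε2.le
  exact ⟨c, ε, f, hε, fun i j hij => by linarith [hc hij], hf, hsep⟩

/-- Every finite group occurs as the Galois group of a finite Galois extension of
`ℝ(t)`, the field of rational functions in one indeterminate over `ℝ`. -/
theorem finite_group_occurs_as_galoisGroup_over_real_ratFunc
    (G : Type) [Group G] [Finite G] :
    ∃ (N : Type) (_ : Field N) (_ : Algebra (RatFunc ℝ) N),
      FiniteDimensional (RatFunc ℝ) N ∧ IsGalois (RatFunc ℝ) N ∧
        Nonempty ((N ≃ₐ[RatFunc ℝ] N) ≃* G) := by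
  obtain ⟨c, ε, f, hε, hc, hf, hsep⟩ := exists_isSheetFamily_separating G
  exact exists_isGalois_of_isSheetFamily hf hε hc hsep
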